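/- Let u be a smooth function on ℝⁿ × (0,1] satisfying ∂ₜ u ≤ Δ u pointwise, such that the positive part u₊ = max(u,0) satisfies: u₊(·,t) → 0 in L²_loc(ℝⁿ) as t → 0⁺, and there exist a > 0 and a positive nondecreasing function L with ∫₁^∞ r/L(r) dr = ∞ such that ∫₀¹ tᵃ ∫_{B(0,r)} u₊(x,t)² dx dt ≤ e^{L(r)} for all r > 0. Then u ≤ 0 on ℝⁿ × (0,1]. -/

import Mathlib

open MeasureTheory Filter Set Metric

/-- The Euclidean Laplacian of `g : ℝⁿ → ℝ`. -/
noncomputable def heatLap {n : ℕ} (g : EuclideanSpace ℝ (Fin n) → ℝ)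
    (x : EuclideanSpace ℝ (Fin n)) : ℝ :=
  ∑ i : Fin n, fderiv ℝ (fun y => fderiv ℝ g y (EuclideanSpace.single i (1 : ℝ))) x
    (EuclideanSpace.single i (1 : ℝ))

/-!
Replace `u₊` by `f = η ∘ u`, where `η` is a smooth convex function vanishing exactly on `(-∞, 0]`,
and mollify in space: `W t = f t ⋆ φ` is again a subsolution. Three steps give `W ≤ 0`, hence
`f = 0`.

* Integrating `d/ds ((s - t/2) W s) ≤ f s ⋆ (φ + (s - t/2) Δφ)` over `[t/2, t]` moves the Laplacian
  onto `φ`, so the weighted `L²` growth bound yields `W t ≤ b * exp (L r) / t ^ (N + 1)` on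
  `B(0, r - 1)`.
* `W t → 0` locally uniformly as `t → 0⁺`. Comparison on unit balls with the barriers
  `M (1 + δ - |x - x₀|²) ^ (-4 (N + 1)) exp (c √t)` then removes the singularity at `t = 0`, leaving
  `W ≤ exp (L r + C)` on `B(0, r - 2)`.
* Let `Λₖ` be the resulting exponent on `B(0, 2ᵏ⁺¹)`, so that `∑ 4ᵏ / Λₖ = ∞`. Comparison with a
  Gaussian barrier shows that passing from `B(0, 2ᵏ⁺¹)` to `B(0, 2ᵏ)` over a time step of length
  proportional to `4ᵏ / Λₖ` increases the upper bound for `W` by at most `exp (-Λₖ)`. Finitely many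
  of these steps, starting from any `k = K`, reach back to `t = 0`, so `W ≤ ∑_{k ≥ K} exp (-Λₖ)`
  on `B(0, 2ᴷ)`; then let `K → ∞`.
-/

open InnerProductSpace Laplacian Topology
open scoped Convolution ContDiff

section LaplacianCalculus

variable {E : Type*} [NormedAddCommGroup E] [InnerProductSpace ℝ E]

theorem hasDerivAt_comp_add_smul {f : E → ℝ} {x v : E} {s : ℝ}
    (hf : DifferentiableAt ℝ f (x + s • v)) :
    HasDerivAt (fun s : ℝ => f (x + s • v)) (fderiv ℝ f (x + s • v) v) s := by
  have h : HasDerivAt (fun s : ℝ => x + s • v) v s := by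
    simpa using ((hasDerivAt_id s).smul_const v).const_add x
  exact hf.hasFDerivAt.comp_hasDerivAt s h

variable [FiniteDimensional ℝ E]

theorem laplacian_eq_sum_fderiv_fderiv {ι : Type*} [Fintype ι] (b : OrthonormalBasis ι ℝ E)
    {f : E → ℝ} {x : E} (hf : ContDiffAt ℝ 2 f x) :
    Δ f x = ∑ i, fderiv ℝ (fun y => fderiv ℝ f y (b i)) x (b i) := by
  have hf' : DifferentiableAt ℝ (fderiv ℝ f) x :=
    (hf.fderiv_right (m := 1) (by norm_num)).differentiableAt one_ne_zero
  simp [laplacian_eq_iteratedFDeriv_orthonormalBasis f b, iteratedFDeriv_two_apply,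
    fderiv_clm_apply hf']

theorem continuous_laplacian {f : E → ℝ} (hf : ContDiff ℝ 2 f) : Continuous (Δ f) := by
  have : Continuous fun x => iteratedFDeriv ℝ 2 f x := hf.continuous_iteratedFDeriv le_rfl
  simp only [laplacian_eq_iteratedFDeriv_stdOrthonormalBasis]
  fun_prop

theorem laplacian_eq_sum_iteratedDeriv {ι : Type*} [Fintype ι] (b : OrthonormalBasis ι ℝ E)
    {f : E → ℝ} {x : E} (hf : ContDiffAt ℝ 2 f x) :
    Δ f x = ∑ i, iteratedDeriv 2 (fun s : ℝ => f (x + s • b i)) 0 := by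
  rw [laplacian_eq_sum_fderiv_fderiv b hf]
  refine Finset.sum_congr rfl fun i _ => ?_
  have hline : Tendsto (fun s : ℝ => x + s • b i) (𝓝 0) (𝓝 x) :=
    Continuous.tendsto' (by fun_prop) _ _ (by simp)
  have hderiv : deriv (fun s : ℝ => f (x + s • b i)) =ᶠ[𝓝 0]
      fun s => fderiv ℝ f (x + s • b i) (b i) := by
    filter_upwards [hline.eventually (hf.eventually (by simp))] with s hs
    exact (hasDerivAt_comp_add_smul (hs.differentiableAt two_ne_zero)).deriv
  have hdiff : DifferentiableAt ℝ (fun y => fderiv ℝ f y (b i)) x :=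
    ((hf.fderiv_right (m := 1) (by norm_num)).differentiableAt one_ne_zero).clm_apply (by fun_prop)
  rw [iteratedDeriv_succ, iteratedDeriv_one, hderiv.deriv_eq,
    (hasDerivAt_comp_add_smul (f := fun y => fderiv ℝ f y (b i)) (s := 0)
      (by simpa using hdiff)).deriv]
  simp

theorem laplacian_comp {η : ℝ → ℝ} {f : E → ℝ} {x : E} (hη : ContDiffAt ℝ 2 η (f x))
    (hf : ContDiffAt ℝ 2 f x) :
    Δ (fun y => η (f y)) x =
      iteratedDeriv 2 η (f x) * ‖fderiv ℝ f x‖ ^ 2 + deriv η (f x) * Δ f x := by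
  set b := stdOrthonormalBasis ℝ E
  have hsum : ‖fderiv ℝ f x‖ ^ 2 = ∑ i, fderiv ℝ f x (b i) ^ 2 := by
    rw [← (toDual ℝ E).symm.norm_map, ← b.sum_sq_norm_inner_left]
    simp
  have hline (i) : ContDiffAt ℝ 2 (fun s : ℝ => f (x + s • b i)) 0 :=
    ContDiffAt.comp (0 : ℝ) (by simpa using hf) (by fun_prop)
  have hline' (i) : deriv (fun s : ℝ => f (x + s • b i)) 0 = fderiv ℝ f x (b i) := by
    simpa using (hasDerivAt_comp_add_smul (f := f) (x := x) (v := b i) (s := 0)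
      (by simpa using hf.differentiableAt two_ne_zero)).deriv
  have hcomp (i) := iteratedDeriv_comp_two (f := fun s : ℝ => f (x + s • b i)) (x := 0)
    (by simpa using hη) (hline i)
  simp only [Function.comp_def, zero_smul, add_zero, hline'] at hcomp
  rw [laplacian_eq_sum_iteratedDeriv (f := fun y => η (f y)) b (hη.comp x hf),
    laplacian_eq_sum_iteratedDeriv b hf, hsum, Finset.mul_sum,
    Finset.mul_sum, ← Finset.sum_add_distrib]
  exact Finset.sum_congr rfl fun i _ => hcomp i

theorem laplacian_norm_sub_sq (x₀ x : E) :
    Δ (fun y => ‖y - x₀‖ ^ 2) x = 2 * Module.finrank ℝ E := by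
  set b := stdOrthonormalBasis ℝ E
  have hf : ContDiff ℝ 2 fun y : E => ‖y - x₀‖ ^ 2 := (contDiff_id.sub contDiff_const).norm_sq ℝ
  rw [laplacian_eq_sum_iteratedDeriv b hf.contDiffAt]
  have hline (i) : (fun s : ℝ => ‖x + s • b i - x₀‖ ^ 2) =
      fun s : ℝ => ‖x - x₀‖ ^ 2 + s * (2 * inner ℝ (x - x₀) (b i)) + s ^ 2 := by
    ext s
    rw [add_sub_right_comm, norm_add_sq_real, inner_smul_right, norm_smul, b.norm_eq_one]
    simp
    ring
  have hquad (p q : ℝ) : iteratedDeriv 2 (fun s : ℝ => p + s * q + s ^ 2) 0 = 2 := by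
    have : deriv (fun s : ℝ => p + s * q + s ^ 2) = fun s => q + 2 * s := by
      ext s
      simp
    simp [iteratedDeriv_succ, this]
  simp [hline, hquad, mul_comm]

theorem laplacian_radial {g : ℝ → ℝ} {x₀ x : E} (hg : ContDiffAt ℝ 2 g (‖x - x₀‖ ^ 2)) :
    Δ (fun y => g (‖y - x₀‖ ^ 2)) x =
      4 * ‖x - x₀‖ ^ 2 * iteratedDeriv 2 g (‖x - x₀‖ ^ 2) +
        2 * Module.finrank ℝ E * deriv g (‖x - x₀‖ ^ 2) := by
  have hnorm : ‖fderiv ℝ (fun y : E => ‖y - x₀‖ ^ 2) x‖ = 2 * ‖x - x₀‖ := by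
    have h : HasFDerivAt (fun y : E => ‖y - x₀‖ ^ 2) (2 • innerSL ℝ (x - x₀)) x := by
      simpa using ((hasFDerivAt_id x).sub_const x₀).norm_sq
    rw [h.fderiv, ← Nat.cast_smul_eq_nsmul ℝ, norm_smul, innerSL_apply_norm]
    simp
  have hf : ContDiff ℝ 2 fun y : E => ‖y - x₀‖ ^ 2 := (contDiff_id.sub contDiff_const).norm_sq ℝ
  rw [laplacian_comp (f := fun y : E => ‖y - x₀‖ ^ 2) hg hf.contDiffAt, hnorm,
    laplacian_norm_sub_sq]
  ring

theorem iteratedDeriv_two_nonpos_of_isLocalMax {f : ℝ → ℝ} {x : ℝ} (hf : ContinuousAt f x)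
    (hmax : IsLocalMax f x) : iteratedDeriv 2 f x ≤ 0 := by
  rw [iteratedDeriv_succ, iteratedDeriv_one]
  by_contra! hpos
  have hmin : IsLocalMin f x := isLocalMin_of_deriv_deriv_pos hpos hmax.deriv_eq_zero hf
  have hconst : f =ᶠ[𝓝 x] fun _ => f x := by
    filter_upwards [hmax, hmin] with s h₁ h₂ using le_antisymm h₁ h₂
  have hderiv : deriv f =ᶠ[𝓝 x] fun _ => 0 := by simpa using hconst.deriv
  simp [hderiv.deriv_eq] at hpos

theorem laplacian_nonpos_of_isLocalMax {f : E → ℝ} {x : E} (hf : ContDiffAt ℝ 2 f x)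
    (hmax : IsLocalMax f x) : Δ f x ≤ 0 := by
  rw [laplacian_eq_sum_iteratedDeriv (stdOrthonormalBasis ℝ E) hf]
  refine Finset.sum_nonpos fun i _ => ?_
  have hline : Continuous fun s : ℝ => x + s • stdOrthonormalBasis ℝ E i := by fun_prop
  refine iteratedDeriv_two_nonpos_of_isLocalMax
    (hf.continuousAt.comp_of_eq hline.continuousAt (by simp)) ?_
  exact IsMaxFilter.comp_tendsto (l' := 𝓝 0) (by simpa [IsLocalMax] using hmax)
    (hline.tendsto' _ _ (by simp))

theorem deriv_nonneg_of_isMaxOn_Icc_right {f : ℝ → ℝ} {a b : ℝ} (hab : a < b)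
    (hf : DifferentiableAt ℝ f b) (hmax : IsMaxOn f (Icc a b) b) : 0 ≤ deriv f b := by
  have h := (hasDerivAt_iff_tendsto_slope_left_right.1 hf.hasDerivAt).1
  refine ge_of_tendsto h ?_
  filter_upwards [Ioo_mem_nhdsLT hab] with s hs
  rw [slope_def_field]
  exact div_nonneg_of_nonpos (sub_nonpos.2 (hmax ⟨hs.1.le, hs.2.le⟩)) (by linarith [hs.2])

end LaplacianCalculus

section Comparison

variable {E : Type*} [NormedAddCommGroup E] [InnerProductSpace ℝ E] [FiniteDimensional ℝ E]

/-- `w t x` is a classical subsolution `∂ₜ w ≤ Δ w` of the heat equation for times `t ∈ I` and all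
`x ∈ E`. Besides joint continuity, only separate regularity in `t` and in `x` is required. -/
structure IsHeatSubsolutionOn (I : Set ℝ) (w : ℝ → E → ℝ) : Prop where
  continuousOn : ContinuousOn (fun p : ℝ × E => w p.1 p.2) (I ×ˢ univ)
  contDiff : ∀ t ∈ I, ContDiff ℝ 2 (w t)
  differentiableAt : ∀ t ∈ I, ∀ x, DifferentiableAt ℝ (fun s => w s x) t
  deriv_le_laplacian : ∀ t ∈ I, ∀ x, deriv (fun s => w s x) t ≤ Δ (w t) x

namespace IsHeatSubsolutionOn

variable {I : Set ℝ} {w : ℝ → E → ℝ} {t₀ t₁ : ℝ}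

theorem continuous {t : ℝ} (hw : IsHeatSubsolutionOn I w) (ht : t ∈ I) : Continuous (w t) :=
  (hw.contDiff t ht).continuous

theorem le_of_strict_supersolution (hw : IsHeatSubsolutionOn I w) (hI : Icc t₀ t₁ ⊆ I)
    {K : Set E} (hK : IsCompact K) {ψ : ℝ → E → ℝ}
    (hψ : ContinuousOn (fun p : ℝ × E => ψ p.1 p.2) (Icc t₀ t₁ ×ˢ K))
    (hinit : ∀ x ∈ K, w t₀ x ≤ ψ t₀ x)
    (hlat : ∀ t ∈ Icc t₀ t₁, ∀ x ∈ frontier K, w t x ≤ ψ t x)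
    (hψt : ∀ t ∈ Ioc t₀ t₁, ∀ x ∈ interior K, DifferentiableAt ℝ (fun s => ψ s x) t)
    (hψx : ∀ t ∈ Ioc t₀ t₁, ∀ x ∈ interior K, ContDiffAt ℝ 2 (ψ t) x)
    (hsuper : ∀ t ∈ Ioc t₀ t₁, ∀ x ∈ interior K, ψ t x < w t x →
      Δ (ψ t) x < deriv (fun s => ψ s x) t) :
    ∀ t ∈ Icc t₀ t₁, ∀ x ∈ K, w t x ≤ ψ t x := by
  intro t' ht' x' hx'
  by_contra! hlt
  obtain ⟨⟨t, x⟩, ⟨ht, hx⟩, hmax⟩ := (isCompact_Icc.prod hK).exists_isMaxOn ⟨(t', x'), ht', hx'⟩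
    ((hw.continuousOn.mono (prod_mono hI (subset_univ K))).sub hψ)
  replace hmax : ∀ s ∈ Icc t₀ t₁, ∀ y ∈ K, w s y - ψ s y ≤ w t x - ψ t x :=
    fun s hs y hy => hmax (mk_mem_prod hs hy)
  have hpos : ψ t x < w t x := by linarith [hmax t' ht' x' hx']
  have ht₀ : t₀ < t := by
    refine lt_of_le_of_ne ht.1 ?_
    rintro rfl
    exact hpos.not_ge (hinit x hx)
  have hxK : x ∈ interior K := by
    by_contra hxK
    exact hpos.not_ge (hlat t ht x (hK.isClosed.frontier_eq ▸ ⟨hx, hxK⟩))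
  have ht' : t ∈ Ioc t₀ t₁ := ⟨ht₀, ht.2⟩
  have htime : 0 ≤ deriv (fun s => w s x) t - deriv (fun s => ψ s x) t := by
    rw [← deriv_fun_sub (hw.differentiableAt t (hI ht) x) (hψt t ht' x hxK)]
    exact deriv_nonneg_of_isMaxOn_Icc_right ht₀
      ((hw.differentiableAt t (hI ht) x).sub (hψt t ht' x hxK))
      fun s hs => hmax s ⟨hs.1, hs.2.trans ht.2⟩ x hx
  have hspace : Δ (w t) x - Δ (ψ t) x ≤ 0 := by
    have hwx := (hw.contDiff t (hI ht)).contDiffAt (x := x)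
    rw [← hwx.laplacian_sub (hψx t ht' x hxK)]
    refine laplacian_nonpos_of_isLocalMax (hwx.sub (hψx t ht' x hxK)) ?_
    filter_upwards [mem_interior_iff_mem_nhds.1 hxK] with y hy using hmax t ht y hy
  linarith [hw.deriv_le_laplacian t (hI ht) x, hsuper t ht' x hxK hpos]

end IsHeatSubsolutionOn

theorem laplacian_const_add_exp_radial {γ : ℝ → ℝ} {x₀ x : E} (A B : ℝ)
    (hγ : ContDiffAt ℝ 2 γ (‖x - x₀‖ ^ 2)) :
    Δ (fun y => A + Real.exp (B + γ (‖y - x₀‖ ^ 2))) x =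
      Real.exp (B + γ (‖x - x₀‖ ^ 2)) *
        (4 * ‖x - x₀‖ ^ 2 *
            (iteratedDeriv 2 γ (‖x - x₀‖ ^ 2) + deriv γ (‖x - x₀‖ ^ 2) ^ 2) +
          2 * Module.finrank ℝ E * deriv γ (‖x - x₀‖ ^ 2)) := by
  set q := ‖x - x₀‖ ^ 2
  have hBγ : ContDiffAt ℝ 2 (fun q => B + γ q) q := contDiffAt_const.add hγ
  have hderiv : deriv (fun q => A + Real.exp (B + γ q)) q =
      Real.exp (B + γ q) * deriv γ q := by
    rw [deriv_const_add, deriv_exp (hBγ.differentiableAt two_ne_zero), deriv_const_add]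
  have hderiv₂ : iteratedDeriv 2 (fun q => A + Real.exp (B + γ q)) q =
      Real.exp (B + γ q) * (iteratedDeriv 2 γ q + deriv γ q ^ 2) := by
    rw [iteratedDeriv_const_add (by norm_num)]
    have h := iteratedDeriv_comp_two (g := Real.exp) Real.contDiff_exp.contDiffAt hBγ
    rw [deriv_const_add, iteratedDeriv_const_add (by norm_num)] at h
    simp only [iteratedDeriv_eq_iterate, Real.iter_deriv_exp, Real.deriv_exp] at h ⊢
    exact h.trans (by ring)
  rw [laplacian_radial (g := fun q => A + Real.exp (B + γ q))
    (contDiffAt_const.add hBγ.exp), hderiv, hderiv₂]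
  ring

theorem IsHeatSubsolutionOn.le_add_exp_radial {I : Set ℝ} {w : ℝ → E → ℝ} {t₀ t₁ R A : ℝ} {x₀ : E}
    (hw : IsHeatSubsolutionOn I w) (hI : Icc t₀ t₁ ⊆ I) {θ γ : ℝ → ℝ}
    (hθ : ∀ t ∈ Icc t₀ t₁, DifferentiableAt ℝ θ t) (hγ : ∀ q ∈ Icc 0 (R ^ 2), ContDiffAt ℝ 2 γ q)
    (hinit : ∀ x ∈ closedBall x₀ R, w t₀ x ≤ A)
    (hlat : ∀ t ∈ Icc t₀ t₁, ∀ x ∈ sphere x₀ R, w t x ≤ A + Real.exp (θ t + γ (R ^ 2)))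
    (hsuper : ∀ t ∈ Ioc t₀ t₁, ∀ x ∈ closedBall x₀ R,
      A + Real.exp (θ t + γ (‖x - x₀‖ ^ 2)) < w t x →
      4 * ‖x - x₀‖ ^ 2 * (iteratedDeriv 2 γ (‖x - x₀‖ ^ 2) + deriv γ (‖x - x₀‖ ^ 2) ^ 2) +
          2 * Module.finrank ℝ E * deriv γ (‖x - x₀‖ ^ 2) < deriv θ t) :
    ∀ t ∈ Icc t₀ t₁, ∀ x ∈ closedBall x₀ R, w t x ≤ A + Real.exp (θ t + γ (‖x - x₀‖ ^ 2)) := by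
  have hmem {x : E} (hx : x ∈ closedBall x₀ R) : ‖x - x₀‖ ^ 2 ∈ Icc 0 (R ^ 2) :=
    ⟨by positivity, by gcongr; exact mem_closedBall_iff_norm.1 hx⟩
  refine hw.le_of_strict_supersolution hI (isCompact_closedBall x₀ R) ?_
    (fun x hx => (hinit x hx).trans (by linarith [Real.exp_pos (θ t₀ + γ (‖x - x₀‖ ^ 2))]))
    (fun t ht x hx => ?_) (fun t ht x _ => ?_) (fun t _ x hx => ?_) fun t ht x hx hlt => ?_
  · have hθc : ContinuousOn θ (Icc t₀ t₁) := fun t ht => (hθ t ht).continuousAt.continuousWithinAt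
    have hγc : ContinuousOn γ (Icc 0 (R ^ 2)) := fun q hq =>
      (hγ q hq).continuousAt.continuousWithinAt
    exact continuousOn_const.add ((hθc.comp continuousOn_fst fun p hp => hp.1).add
      (hγc.comp (by fun_prop) fun p hp => hmem hp.2)).rexp
  · have hx' := frontier_closedBall_subset_sphere hx
    rw [mem_sphere_iff_norm.1 hx']
    exact hlat t ht x hx'
  · exact (((hθ t (Ioc_subset_Icc_self ht)).add_const _).exp).const_add A
  · have hsq : ContDiff ℝ 2 fun y : E => ‖y - x₀‖ ^ 2 := (contDiff_id.sub contDiff_const).norm_sq ℝ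
    exact contDiffAt_const.add (contDiffAt_const.add
      ((hγ _ (hmem (interior_subset hx))).comp x hsq.contDiffAt)).exp
  · have hdiff : DifferentiableAt ℝ (fun s => θ s + γ (‖x - x₀‖ ^ 2)) t :=
      (hθ t (Ioc_subset_Icc_self ht)).add_const _
    rw [laplacian_const_add_exp_radial A (θ t) (hγ _ (hmem (interior_subset hx))),
      deriv_const_add, deriv_exp hdiff, deriv_add_const]
    exact mul_lt_mul_of_pos_left (hsuper t ht x (interior_subset hx) hlt) (Real.exp_pos _)

end Comparison

theorem deriv_neg_mul_log_const_sub (p b q : ℝ) :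
    deriv (fun q => -p * Real.log (b - q)) q = p / (b - q) := by
  rw [deriv_const_mul_field, deriv_comp_const_sub (f := Real.log), Real.deriv_log]
  ring

theorem iteratedDeriv_two_neg_mul_log_const_sub (p b q : ℝ) :
    iteratedDeriv 2 (fun q => -p * Real.log (b - q)) q = p / (b - q) ^ 2 := by
  rw [iteratedDeriv_succ, iteratedDeriv_one, funext (deriv_neg_mul_log_const_sub p b)]
  simp only [div_eq_mul_inv]
  rw [deriv_const_mul_field, deriv_comp_const_sub (f := fun q => q⁻¹), deriv_inv]
  ring

theorem gaussianBarrier_strict {d q R Λ : ℝ} (hd : 0 ≤ d) (hR : 0 < R) (hΛ : 1 ≤ Λ)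
    (hq : q ≤ (2 * R) ^ 2) :
    4 * q * (Λ / R ^ 2) ^ 2 + 2 * d * (Λ / R ^ 2) < (2 * d + 17) * Λ ^ 2 / R ^ 2 := by
  calc 4 * q * (Λ / R ^ 2) ^ 2 + 2 * d * (Λ / R ^ 2)
      ≤ 4 * (2 * R) ^ 2 * (Λ / R ^ 2) ^ 2 + 2 * d * (Λ * Λ / R ^ 2) := by
        gcongr
        exact le_mul_of_one_le_left (by linarith) hΛ
    _ = (2 * d + 16) * Λ ^ 2 / R ^ 2 := by field_simp; ring
    _ < (2 * d + 17) * Λ ^ 2 / R ^ 2 := by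
        gcongr
        norm_num

theorem gaussianBarrier_le {d q R s t Λ : ℝ} (hR : 0 < R) (hΛ : 0 ≤ Λ) (hq : q ≤ R ^ 2)
    (hlen : (2 * d + 17) * Λ * (t - s) ≤ R ^ 2) :
    -3 * Λ + (2 * d + 17) * Λ ^ 2 / R ^ 2 * (t - s) + Λ / R ^ 2 * q ≤ -Λ := by
  calc -3 * Λ + (2 * d + 17) * Λ ^ 2 / R ^ 2 * (t - s) + Λ / R ^ 2 * q
      = -3 * Λ + (2 * d + 17) * Λ * (t - s) * (Λ / R ^ 2) + Λ / R ^ 2 * q := by ring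
    _ ≤ -3 * Λ + R ^ 2 * (Λ / R ^ 2) + Λ / R ^ 2 * R ^ 2 := by gcongr
    _ = -Λ := by field_simp; ring

theorem logBarrier_strict {p d h q σ : ℝ} (hp : 0 < p) (hd : 0 ≤ d) (hh : 0 < h) (hh₂ : h ≤ 2)
    (hq : q ∈ Icc (0 : ℝ) 1) (hσ : 0 < σ) (hσh : σ < h ^ 2) :
    4 * q * (p / h ^ 2 + (p / h) ^ 2) + 2 * d * (p / h) < 8 * p * (p + 1 + d) / (2 * σ) := by
  have hh' : p / h ≤ 2 * (p / h ^ 2) := by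
    rw [mul_div_assoc', div_le_div_iff₀ hh (by positivity)]
    nlinarith [mul_pos hp hh]
  calc 4 * q * (p / h ^ 2 + (p / h) ^ 2) + 2 * d * (p / h)
      ≤ 4 * 1 * (p / h ^ 2 + (p / h) ^ 2) + 2 * d * (2 * (p / h ^ 2)) := by
        gcongr
        exact hq.2
    _ = 8 * p * (p + 1 + d) / (2 * h ^ 2) := by field_simp; ring
    _ < 8 * p * (p + 1 + d) / (2 * σ) := by gcongr

theorem exp_logBarrier {M h : ℝ} (hM : 0 < M) (hh : 0 < h) (s : ℝ) (N : ℕ) :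
    Real.exp (Real.log M + s + -(4 * N) * Real.log h) = M * Real.exp s / h ^ (4 * N) := by
  have hlog : 4 * N * Real.log h = Real.log (h ^ (4 * N)) := by rw [Real.log_pow]; push_cast; ring
  rw [neg_mul, hlog, Real.exp_add, Real.exp_add, Real.exp_neg, Real.exp_log hM,
    Real.exp_log (pow_pos hh _), div_eq_mul_inv]

theorem div_pow_le_exp_logBarrier {M τ h s : ℝ} {N : ℕ} (hM : 0 < M) (hh : 0 < h) (hh₁ : h ≤ 1)
    (hhτ : h ≤ τ) (hs : 0 ≤ s) :
    M / τ ^ N ≤ Real.exp (Real.log M + s + -(4 * N) * Real.log h) := by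
  rw [exp_logBarrier hM hh]
  gcongr
  · exact le_mul_of_one_le_right hM.le (Real.one_le_exp hs)
  · calc h ^ (4 * N) ≤ h ^ N := pow_le_pow_of_le_one hh.le hh₁ (by lia)
      _ ≤ τ ^ N := by gcongr

theorem sqrt_lt_sq_of_exp_logBarrier_lt {M τ h s : ℝ} {N : ℕ} (hM : 0 < M) (hτ : 0 < τ)
    (hh : 0 < h) (hs : 0 ≤ s)
    (hlt : Real.exp (Real.log M + s + -(4 * N) * Real.log h) < M / τ ^ N) : √τ < h ^ 2 := by
  rw [exp_logBarrier hM hh] at hlt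
  have hdiv : M / h ^ (4 * N) < M / τ ^ N := by
    refine lt_of_le_of_lt ?_ hlt
    gcongr
    exact le_mul_of_one_le_right hM.le (Real.one_le_exp hs)
  have hpow : √τ ^ (2 * N) < (h ^ 2) ^ (2 * N) := by
    rw [pow_mul, Real.sq_sqrt hτ.le, ← pow_mul, ← mul_assoc]
    exact (div_lt_div_iff_of_pos_left hM (by positivity) (by positivity)).1 hdiv
  exact lt_of_pow_lt_pow_left₀ _ (by positivity) hpow

namespace IsHeatSubsolutionOn

variable {E : Type*} [NormedAddCommGroup E] [InnerProductSpace ℝ E] [FiniteDimensional ℝ E]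
  {w : ℝ → E → ℝ} {T : ℝ} {x₀ : E}

theorem le_add_exp_neg {I : Set ℝ} (hw : IsHeatSubsolutionOn I w) {s t R A Λ : ℝ}
    (hI : Icc s t ⊆ I) (hst : s ≤ t) (hR : 0 < R) (hA : 0 ≤ A) (hΛ : 1 ≤ Λ)
    (hlen : (2 * Module.finrank ℝ E + 17) * Λ * (t - s) ≤ R ^ 2)
    (hbound : ∀ τ ∈ Icc s t, ∀ x ∈ sphere x₀ (2 * R), w τ x ≤ Real.exp Λ)
    (hinit : ∀ x ∈ closedBall x₀ (2 * R), w s x ≤ A) :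
    ∀ x ∈ closedBall x₀ R, w t x ≤ A + Real.exp (-Λ) := by
  intro x hx
  set d : ℝ := (Module.finrank ℝ E : ℝ)
  have hd : 0 ≤ d := Nat.cast_nonneg _
  set κ : ℝ := (2 * d + 17) * Λ ^ 2 / R ^ 2
  have hκ₀ : 0 ≤ κ := by positivity
  have key := hw.le_add_exp_radial (x₀ := x₀) (R := 2 * R) (A := A) hI
    (θ := fun τ => -3 * Λ + κ * (τ - s)) (γ := fun q => Λ / R ^ 2 * q)
    (fun τ _ => by fun_prop) (fun q _ => by fun_prop) hinit ?lateral ?strict t ⟨hst, le_rfl⟩ x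
    (closedBall_subset_closedBall (by linarith) hx)
  case lateral =>
    intro τ hτ y hy
    have hγ : Λ / R ^ 2 * (2 * R) ^ 2 = 4 * Λ := by field_simp; ring
    refine (hbound τ hτ y hy).trans (le_add_of_nonneg_of_le hA (Real.exp_le_exp.2 ?_))
    rw [hγ]
    linarith [mul_nonneg hκ₀ (sub_nonneg.2 hτ.1)]
  case strict =>
    intro τ _ y hy _
    have hγ : deriv (fun q => Λ / R ^ 2 * q) = fun _ => Λ / R ^ 2 := by
      ext q
      simp
    have hθ : deriv (fun τ => -3 * Λ + κ * (τ - s)) τ = κ := by simp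
    rw [hθ, iteratedDeriv_succ, iteratedDeriv_one, hγ, deriv_const, zero_add]
    refine gaussianBarrier_strict hd hR hΛ ?_
    gcongr
    exact mem_closedBall_iff_norm.1 hy
  refine key.trans (add_le_add_right (Real.exp_le_exp.2 ?_) A)
  refine gaussianBarrier_le hR (by linarith) ?_ hlen
  gcongr
  exact mem_closedBall_iff_norm.1 hx

theorem le_add_exp_neg_two_pow {I : Set ℝ} (hw : IsHeatSubsolutionOn I w) {s t A Λ : ℝ} {k : ℕ}
    (hI : Icc s t ⊆ I) (hst : s ≤ t) (hA : 0 ≤ A) (hΛ : 1 ≤ Λ)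
    (hlen : t - s ≤ 4 ^ k / Λ / (2 * Module.finrank ℝ E + 17))
    (hbound : ∀ τ ∈ Icc s t, ∀ x ∈ closedBall x₀ (2 ^ (k + 1)), w τ x ≤ Real.exp Λ)
    (hinit : ∀ x ∈ closedBall x₀ (2 ^ (k + 1)), w s x ≤ A) :
    ∀ x ∈ closedBall x₀ (2 ^ k), w t x ≤ A + Real.exp (-Λ) := by
  have hΛ₀ : 0 < Λ := one_pos.trans_le hΛ
  rw [pow_succ'] at hbound hinit
  refine hw.le_add_exp_neg hI hst (by positivity) hA hΛ ?_
    (fun τ hτ x hx => hbound τ hτ x (sphere_subset_closedBall hx)) hinit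
  rw [div_div, le_div_iff₀ (by positivity)] at hlen
  calc (2 * Module.finrank ℝ E + 17) * Λ * (t - s)
      = (t - s) * (Λ * (2 * Module.finrank ℝ E + 17)) := by ring
    _ ≤ 4 ^ k := hlen
    _ = (2 ^ k) ^ 2 := by rw [← pow_mul, mul_comm, pow_mul]; norm_num

theorem le_add_mul_exp_sqrt_of_le_div_pow {I : Set ℝ} (hw : IsHeatSubsolutionOn I w)
    {δ t ε M : ℝ} (hI : Icc δ t ⊆ I) (hδ₀ : 0 < δ) (hδ₁ : δ ≤ 1) (hδt : δ ≤ t) (hε : 0 ≤ ε)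
    (hM : 0 < M) {N : ℕ} (hN : N ≠ 0)
    (hbound : ∀ τ ∈ Icc δ t, ∀ x ∈ closedBall x₀ 1, w τ x ≤ M / τ ^ N)
    (hinit : ∀ x ∈ closedBall x₀ 1, w δ x ≤ ε) :
    w t x₀ ≤ ε + M * Real.exp (8 * (4 * N) * (4 * N + 1 + Module.finrank ℝ E) * √t) := by
  set d : ℝ := (Module.finrank ℝ E : ℝ)
  set p : ℝ := 4 * N with hp
  have hp₀ : 0 < p := by positivity
  have hd₀ : 0 ≤ d := Nat.cast_nonneg _
  set c : ℝ := 8 * p * (p + 1 + d)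
  have hc (τ : ℝ) : 0 ≤ c * √τ := by positivity
  have key := hw.le_add_exp_radial (x₀ := x₀) (R := 1) (A := ε) (t₀ := δ) (t₁ := t)
    hI (θ := fun τ => Real.log M + c * √τ)
    (γ := fun q => -p * Real.log (1 + δ - q)) ?diff_time ?diff_space hinit ?lateral ?strict t
    ⟨hδt, le_rfl⟩ x₀ (mem_closedBall_self one_pos.le)
  case diff_time =>
    intro τ hτ
    have := (Real.hasDerivAt_sqrt (hδ₀.trans_le hτ.1).ne').differentiableAt
    fun_prop
  case diff_space =>
    intro q hq
    have : 1 + δ - q ≠ 0 := by linarith [hq.2]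
    exact contDiffAt_const.mul ((contDiffAt_const.sub contDiffAt_id).log this)
  case lateral =>
    intro τ hτ x hx
    refine (hbound τ hτ x (sphere_subset_closedBall hx)).trans (le_add_of_nonneg_of_le hε ?_)
    rw [one_pow, add_sub_cancel_left]
    exact div_pow_le_exp_logBarrier hM hδ₀ hδ₁ hτ.1 (hc τ)
  case strict =>
    intro τ hτ x hx hlt
    have hτ₀ : 0 < τ := hδ₀.trans hτ.1
    have hq : ‖x - x₀‖ ^ 2 ∈ Icc (0 : ℝ) 1 :=
      ⟨by positivity, pow_le_one₀ (norm_nonneg _) (mem_closedBall_iff_norm.1 hx)⟩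
    have hh : 0 < 1 + δ - ‖x - x₀‖ ^ 2 := by linarith [hq.2]
    -- Where `√τ` is larger, the barrier already exceeds the a priori bound `M / τ ^ N`.
    have hσ : √τ < (1 + δ - ‖x - x₀‖ ^ 2) ^ 2 := sqrt_lt_sq_of_exp_logBarrier_lt hM hτ₀ hh (hc τ)
      (lt_of_add_lt_of_nonneg_right (hlt.trans_le (hbound τ (Ioc_subset_Icc_self hτ) x hx)) hε)
    rw [iteratedDeriv_two_neg_mul_log_const_sub, deriv_neg_mul_log_const_sub, deriv_const_add,
      deriv_const_mul_field, (Real.hasDerivAt_sqrt hτ₀.ne').deriv, mul_one_div]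
    exact logBarrier_strict hp₀ hd₀ hh (by linarith [hq.1]) hq (Real.sqrt_pos.2 hτ₀) hσ
  have hcenter : 0 < 1 + δ - ‖x₀ - x₀‖ ^ 2 := by
    rw [sub_self, norm_zero]
    linarith
  rw [hp, exp_logBarrier hM hcenter] at key
  refine key.trans (add_le_add_right ?_ ε)
  exact div_le_self (by positivity) (one_le_pow₀ (by simp [hδ₀.le]))

theorem le_mul_exp_sqrt_of_le_div_pow (hw : IsHeatSubsolutionOn (Ioo 0 T) w) {M : ℝ} (hM : 0 < M)
    {N : ℕ} (hN : N ≠ 0) (hbound : ∀ t ∈ Ioo 0 T, ∀ x ∈ closedBall x₀ 1, w t x ≤ M / t ^ N)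
    (hinit : ∀ ε > 0, ∀ᶠ t in 𝓝[>] 0, ∀ x ∈ closedBall x₀ 1, w t x ≤ ε) {t : ℝ}
    (ht : t ∈ Ioo 0 T) :
    w t x₀ ≤ M * Real.exp (8 * (4 * N) * (4 * N + 1 + Module.finrank ℝ E) * √t) := by
  refine le_of_forall_pos_le_add fun ε hε => ?_
  obtain ⟨δ, hδ, hδ₀, hδt⟩ := ((hinit ε hε).and (Ioo_mem_nhdsGT (lt_min ht.1 one_pos))).exists
  have hI : Icc δ t ⊆ Ioo 0 T := fun τ hτ => ⟨hδ₀.trans_le hτ.1, hτ.2.trans_lt ht.2⟩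
  rw [add_comm]
  exact hw.le_add_mul_exp_sqrt_of_le_div_pow hI hδ₀ (hδt.le.trans (min_le_right _ _))
    (hδt.le.trans (min_le_left _ _)) hε.le hM hN (fun τ hτ => hbound τ (hI hτ)) hδ

theorem le_add_sum_exp_neg (hw : IsHeatSubsolutionOn (Ioo 0 T) w) {Λ : ℕ → ℝ} (hΛ : ∀ k, 1 ≤ Λ k)
    (hbound : ∀ k : ℕ, ∀ t ∈ Ioo 0 T, ∀ x ∈ closedBall (0 : E) (2 ^ (k + 1)),
      w t x ≤ Real.exp (Λ k))
    {t : ℝ} (ht : t < T) (K j : ℕ) {s A : ℝ} (hA : 0 ≤ A) (hs : s ∈ Ioc 0 t)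
    (hlen : t - s ≤ ∑ i ∈ Finset.range j,
      4 ^ (i + K) / Λ (i + K) / (2 * Module.finrank ℝ E + 17))
    (hinit : ∀ x ∈ closedBall (0 : E) (2 ^ (j + K)), w s x ≤ A) :
    ∀ x ∈ closedBall (0 : E) (2 ^ K),
      w t x ≤ A + ∑ i ∈ Finset.range j, Real.exp (-Λ (i + K)) := by
  induction j generalizing s A with
  | zero =>
    obtain rfl : t = s := by
      rw [Finset.sum_range_zero] at hlen
      linarith [hs.2]
    simpa using hinit
  | succ j ih =>
    set k := j + K
    have hΛk : 0 < Λ k := one_pos.trans_le (hΛ k)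
    set δ : ℝ := 4 ^ k / Λ k / (2 * Module.finrank ℝ E + 17)
    have hδ₀ : 0 ≤ δ := by positivity
    have hs' : min t (s + δ) ∈ Ioc 0 t :=
      ⟨lt_min (hs.1.trans_le hs.2) (by linarith [hs.1]), min_le_left _ _⟩
    have hI : Icc s (min t (s + δ)) ⊆ Ioo 0 T := fun τ hτ =>
      ⟨hs.1.trans_le hτ.1, (hτ.2.trans hs'.2).trans_lt ht⟩
    have hstep := hw.le_add_exp_neg_two_pow hI (le_min hs.2 (by linarith)) hA (hΛ k)
      (by linarith [min_le_right t (s + δ)]) (fun τ hτ => hbound k τ (hI hτ))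
      (by rwa [show k + 1 = j + 1 + K by lia])
    rw [Finset.sum_range_succ] at hlen ⊢
    intro x hx
    refine (ih (by positivity) hs' ?_ hstep x hx).trans_eq (by ring)
    rw [sub_le_iff_le_add, ← min_add_add_left]
    refine le_min (le_add_of_nonneg_left (Finset.sum_nonneg fun i _ => ?_)) (by linarith)
    have := one_pos.trans_le (hΛ (i + K))
    positivity

theorem nonpos_of_not_summable (hw : IsHeatSubsolutionOn (Ioo 0 T) w) {Λ : ℕ → ℝ}
    (hΛ : ∀ k, 1 ≤ Λ k) (hΛ_sum : Summable fun k => Real.exp (-Λ k))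
    (hbound : ∀ k : ℕ, ∀ t ∈ Ioo 0 T, ∀ x ∈ closedBall (0 : E) (2 ^ (k + 1)),
      w t x ≤ Real.exp (Λ k))
    (hinit : ∀ R, ∀ ε > 0, ∀ᶠ t in 𝓝[>] 0, ∀ x ∈ closedBall (0 : E) R, w t x ≤ ε)
    (hdiv : ¬Summable fun k : ℕ => (4 : ℝ) ^ k / Λ k) {t : ℝ} (ht : t ∈ Ioo 0 T) (x : E) :
    w t x ≤ 0 := by
  have hΛ₀ (k : ℕ) : 0 < Λ k := one_pos.trans_le (hΛ k)
  set c : ℝ := 2 * Module.finrank ℝ E + 17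
  have hc : 0 < c := by positivity
  have htail (K : ℕ) (hK : x ∈ closedBall (0 : E) (2 ^ K)) :
      w t x ≤ ∑' i, Real.exp (-Λ (i + K)) := by
    refine le_of_forall_pos_le_add fun ε hε => ?_
    have hdivK : ¬Summable fun i => 4 ^ (i + K) / Λ (i + K) / c := by
      rw [summable_nat_add_iff (f := fun i => 4 ^ i / Λ i / c) K, summable_div_const_iff hc.ne']
      exact hdiv
    obtain ⟨j, hj⟩ := ((not_summable_iff_tendsto_nat_atTop_of_nonneg fun i => by
      have := hΛ₀ (i + K)
      positivity).1 hdivK).eventually_ge_atTop t |>.exists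
    obtain ⟨s, hsinit, hs₀, hst⟩ := ((hinit (2 ^ (j + K)) ε hε).and (Ioo_mem_nhdsGT ht.1)).exists
    have hsum : Summable fun i => Real.exp (-Λ (i + K)) :=
      (summable_nat_add_iff (f := fun i => Real.exp (-Λ i)) K).2 hΛ_sum
    rw [add_comm]
    refine (hw.le_add_sum_exp_neg hΛ hbound ht.2 K j hε.le ⟨hs₀, hst.le⟩ (by linarith) hsinit x
      hK).trans (add_le_add_right (hsum.sum_le_tsum _ fun i _ => (Real.exp_pos _).le) ε)
  refine ge_of_tendsto (tendsto_sum_nat_add fun i => Real.exp (-Λ i)) ?_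
  filter_upwards [(tendsto_pow_atTop_atTop_of_one_lt one_lt_two).eventually_ge_atTop ‖x‖] with K hK
  exact htail K (mem_closedBall_zero_iff.2 hK)

end IsHeatSubsolutionOn

theorem not_summable_div_add_of_le_mul {a ℓ e : ℕ → ℝ} {M : ℝ} (hM : 0 < M) (ha : ∀ k, 0 ≤ a k)
    (hℓ : ∀ k, 0 < ℓ k) (he : ∀ k, 0 ≤ e k) (hea : ∀ k, e k ≤ M * a k)
    (h : ¬Summable fun k => a k / ℓ k) : ¬Summable fun k => a k / (ℓ k + e k) := by
  refine fun hs => h (Summable.of_norm_bounded_eventually_nat (hs.mul_left 2) ?_)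
  filter_upwards [hs.tendsto_atTop_zero.eventually_lt_const (show 0 < 1 / (2 * M) by positivity)]
    with k hk
  have hsum : 0 < ℓ k + e k := add_pos_of_pos_of_nonneg (hℓ k) (he k)
  rw [div_lt_div_iff₀ hsum (by positivity)] at hk
  have hle : e k ≤ ℓ k := by linarith [hea k]
  rw [Real.norm_of_nonneg (div_nonneg (ha k) (hℓ k).le), mul_div_assoc',
    div_le_div_iff₀ (hℓ k) hsum]
  nlinarith [mul_nonneg (ha k) (sub_nonneg.2 hle)]

theorem setLIntegral_ofReal_div_Icc_le {L : ℝ → ℝ} {r : ℝ} (hr : 0 ≤ r) (hL : 0 < L r)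
    (hL_mono : ∀ s, r ≤ s → L r ≤ L s) :
    ∫⁻ s in Icc r (2 * r), ENNReal.ofReal (s / L s) ≤ ENNReal.ofReal (2 * (r ^ 2 / L r)) := by
  calc ∫⁻ s in Icc r (2 * r), ENNReal.ofReal (s / L s)
      ≤ ∫⁻ _ in Icc r (2 * r), ENNReal.ofReal (2 * r / L r) := by
        refine setLIntegral_mono measurable_const fun s hs => ENNReal.ofReal_le_ofReal ?_
        exact div_le_div₀ (by positivity) hs.2 hL (hL_mono s hs.1)
    _ = ENNReal.ofReal (2 * (r ^ 2 / L r)) := by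
        rw [setLIntegral_const, Real.volume_Icc, ← ENNReal.ofReal_mul (by positivity)]
        ring_nf

theorem not_summable_four_pow_div {L : ℝ → ℝ} (hL_pos : ∀ r, 1 ≤ r → 0 < L r)
    (hL_mono : MonotoneOn L (Ici 1))
    (hL_div : ∫⁻ r in Ioi (1 : ℝ), ENNReal.ofReal (r / L r) = ⊤) :
    ¬Summable fun k : ℕ => (4 : ℝ) ^ k / L (2 ^ k) := by
  intro hs
  have hpow (k : ℕ) : (1 : ℝ) ≤ 2 ^ k := one_le_pow₀ one_le_two
  have hcover : Ioi (1 : ℝ) ⊆ ⋃ k : ℕ, Icc ((2 : ℝ) ^ k) (2 * 2 ^ k) := by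
    intro r hr
    obtain ⟨k, hk, hk'⟩ := exists_nat_pow_near (le_of_lt hr) (one_lt_two : (1 : ℝ) < 2)
    exact mem_iUnion.2 ⟨k, hk, by linarith [pow_succ (2 : ℝ) k]⟩
  have hpiece (k : ℕ) : ∫⁻ r in Icc ((2 : ℝ) ^ k) (2 * 2 ^ k), ENNReal.ofReal (r / L r) ≤
      ENNReal.ofReal (2 * ((4 : ℝ) ^ k / L (2 ^ k))) := by
    have h := setLIntegral_ofReal_div_Icc_le (by positivity) (hL_pos _ (hpow k))
      fun s hs => hL_mono (hpow k) ((hpow k).trans hs) hs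
    rwa [← pow_mul, mul_comm k, pow_mul, show (2 : ℝ) ^ 2 = 4 by norm_num] at h
  have hnonneg (k : ℕ) : 0 ≤ 2 * ((4 : ℝ) ^ k / L (2 ^ k)) := by
    have := hL_pos _ (hpow k)
    positivity
  refine (lt_top_iff_ne_top.1 ?_) hL_div
  calc ∫⁻ r in Ioi (1 : ℝ), ENNReal.ofReal (r / L r)
      ≤ ∑' k : ℕ, ∫⁻ r in Icc ((2 : ℝ) ^ k) (2 * 2 ^ k), ENNReal.ofReal (r / L r) :=
        (lintegral_mono_set hcover).trans (lintegral_iUnion_le _ _)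
    _ ≤ ∑' k : ℕ, ENNReal.ofReal (2 * ((4 : ℝ) ^ k / L (2 ^ k))) := ENNReal.tsum_le_tsum hpiece
    _ = ENNReal.ofReal (∑' k : ℕ, 2 * ((4 : ℝ) ^ k / L (2 ^ k))) :=
        (ENNReal.ofReal_tsum_of_nonneg hnonneg (hs.mul_left 2)).symm
    _ < ⊤ := ENNReal.ofReal_lt_top

theorem not_summable_four_pow_div_shift {L : ℝ → ℝ} (m : ℕ)
    (h : ¬Summable fun k : ℕ => (4 : ℝ) ^ k / L (2 ^ k)) :
    ¬Summable fun k : ℕ => (4 : ℝ) ^ k / L (2 ^ (k + m)) := by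
  refine fun hs => h ((summable_nat_add_iff m).1 ((hs.mul_left (4 ^ m)).congr fun k => ?_))
  ring

section Mollification

theorem hasDerivAt_integral_of_compact_support {X : Type*} [NormedAddCommGroup X]
    [MeasurableSpace X] [BorelSpace X] [SecondCountableTopology X] {μ : Measure X}
    [IsFiniteMeasureOnCompacts μ] {F F' : ℝ → X → ℝ} {I : Set ℝ} {k : Set X} {s₀ : ℝ}
    (hI : IsOpen I) (hs₀ : s₀ ∈ I) (hk : IsCompact k) (hF : ∀ s ∈ I, Continuous (F s))
    (hF' : ContinuousOn (fun p : ℝ × X => F' p.1 p.2) (I ×ˢ univ))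
    (hderiv : ∀ s ∈ I, ∀ y, HasDerivAt (fun s => F s y) (F' s y) s)
    (hFk : ∀ s ∈ I, ∀ y, y ∉ k → F s y = 0) (hF'k : ∀ s ∈ I, ∀ y, y ∉ k → F' s y = 0) :
    HasDerivAt (fun s => ∫ y, F s y ∂μ) (∫ y, F' s₀ y ∂μ) s₀ := by
  obtain ⟨ε, hε, hball⟩ := nhds_basis_closedBall.mem_iff.1 (hI.mem_nhds hs₀)
  obtain ⟨C, hC⟩ := ((isCompact_closedBall s₀ ε).prod hk).exists_bound_of_continuousOn
    (hF'.mono (prod_mono hball (subset_univ k)))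
  have hF's : Continuous (F' s₀) := continuousOn_univ.1 <|
    hF'.comp (f := fun y => (s₀, y)) (by fun_prop) fun y _ => ⟨hs₀, mem_univ y⟩
  refine (hasDerivAt_integral_of_dominated_loc_of_deriv_le (s := closedBall s₀ ε)
    (bound := k.indicator fun _ => C) (closedBall_mem_nhds s₀ hε) ?_ ?_
    hF's.aestronglyMeasurable ?_ ?_ ?_).2
  · filter_upwards [hI.mem_nhds hs₀] with s hs using (hF s hs).aestronglyMeasurable
  · exact (hF s₀ hs₀).integrable_of_hasCompactSupport (HasCompactSupport.intro hk (hFk s₀ hs₀))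
  · refine ae_of_all _ fun y s hs => ?_
    by_cases hy : y ∈ k
    · rw [indicator_of_mem hy]
      exact hC (s, y) ⟨hs, hy⟩
    · rw [indicator_of_notMem hy, hF'k s (hball hs) y hy, norm_zero]
  · exact (integrable_indicator_iff hk.measurableSet).2 (integrableOn_const hk.measure_ne_top)
  · exact ae_of_all _ fun y s hs => hderiv s (hball hs) y

variable {E : Type*} [NormedAddCommGroup E] [InnerProductSpace ℝ E] [FiniteDimensional ℝ E]
  [MeasurableSpace E] [BorelSpace E] {g φ : E → ℝ}

theorem fderiv_convolution_apply (hg : LocallyIntegrable g) (hφ : ContDiff ℝ 1 φ)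
    (hc : HasCompactSupport φ) (x v : E) :
    fderiv ℝ (g ⋆ φ) x v = (g ⋆ fun y => fderiv ℝ φ y v) x := by
  rw [(hc.hasFDerivAt_convolution_right _ hg hφ x).fderiv,
    convolution_precompR_apply _ hg (hc.fderiv ℝ) (hφ.continuous_fderiv one_ne_zero)]

theorem convolution_fderiv_apply_comm (hg : ContDiff ℝ 1 g) (hφ : ContDiff ℝ 1 φ)
    (hc : HasCompactSupport φ) (v : E) :
    ((fun y => fderiv ℝ g y v) ⋆ φ) = (g ⋆ fun y => fderiv ℝ φ y v) := by
  ext x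
  let φx : E → ℝ := fun y => φ (x - y)
  have hφx : ContDiff ℝ 1 φx := hφ.comp (contDiff_const.sub contDiff_id)
  have hcx : HasCompactSupport φx := hc.comp_homeomorph (Homeomorph.subLeft x)
  have hφx_fderiv (y : E) : fderiv ℝ φx y v = -fderiv ℝ φ (x - y) v := by
    have hφy := (hφ.differentiable one_ne_zero (x - y)).hasFDerivAt
    exact (DFunLike.congr_fun (hφy.comp y ((hasFDerivAt_id y).const_sub x)).fderiv v).trans
      (by simp)
  have hg' : Continuous fun y => fderiv ℝ g y v := by fun_prop (disch := simp)
  have hφx' : Continuous fun y => fderiv ℝ φx y v := by fun_prop (disch := simp)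
  have hparts := integral_mul_fderiv_eq_neg_fderiv_mul_of_integrable (μ := volume) (v := v)
    ((hg'.mul hφx.continuous).integrable_of_hasCompactSupport hcx.mul_left)
    ((hg.continuous.mul hφx').integrable_of_hasCompactSupport (hcx.fderiv_apply ℝ v).mul_left)
    ((hg.continuous.mul hφx.continuous).integrable_of_hasCompactSupport hcx.mul_left)
    (fun y _ => hg.differentiable one_ne_zero y) (fun y _ => hφx.differentiable one_ne_zero y)
  simp only [hφx_fderiv, mul_neg, integral_neg, neg_inj] at hparts
  exact hparts.symm

theorem convolution_laplacian_eq_sum {ι : Type*} [Fintype ι] (b : OrthonormalBasis ι ℝ E)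
    (hg : LocallyIntegrable g) (hφ : ContDiff ℝ 2 φ) (hc : HasCompactSupport φ) (x : E) :
    (g ⋆ Δ φ) x = ∑ i, (g ⋆ fun y => fderiv ℝ (fun y => fderiv ℝ φ y (b i)) y (b i)) x := by
  have hφ₂ (i) : Continuous fun y => fderiv ℝ (fun y => fderiv ℝ φ y (b i)) y (b i) := by
    fun_prop (disch := simp)
  simp only [convolution_lsmul, smul_eq_mul, laplacian_eq_sum_fderiv_fderiv b hφ.contDiffAt,
    Finset.mul_sum]
  exact integral_finsetSum _ fun i _ => ((hc.fderiv_apply ℝ (b i)).fderiv_apply ℝ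
    (b i)).convolutionExists_right (.lsmul ℝ ℝ) hg (hφ₂ i) x

theorem laplacian_convolution (hg : LocallyIntegrable g) (hφ : ContDiff ℝ 2 φ)
    (hc : HasCompactSupport φ) (x : E) : Δ (g ⋆ φ) x = (g ⋆ Δ φ) x := by
  set b := stdOrthonormalBasis ℝ E
  rw [convolution_laplacian_eq_sum b hg hφ hc,
    laplacian_eq_sum_fderiv_fderiv b (hc.contDiff_convolution_right _ hg hφ).contDiffAt]
  refine Finset.sum_congr rfl fun i _ => ?_
  rw [← fderiv_convolution_apply hg (by fun_prop) (hc.fderiv_apply ℝ (b i))]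
  simp only [fderiv_convolution_apply hg (hφ.of_le one_le_two) hc]

theorem convolution_laplacian_comm (hg : ContDiff ℝ 2 g) (hφ : ContDiff ℝ 2 φ)
    (hc : HasCompactSupport φ) (x : E) : (Δ g ⋆ φ) x = (g ⋆ Δ φ) x := by
  set b := stdOrthonormalBasis ℝ E
  have hg₂ (i) : Continuous fun y => fderiv ℝ (fun y => fderiv ℝ g y (b i)) y (b i) := by
    fun_prop (disch := simp)
  rw [convolution_laplacian_eq_sum b hg.continuous.locallyIntegrable hφ hc]
  calc (Δ g ⋆ φ) x
      = ∑ i, ((fun y => fderiv ℝ (fun y => fderiv ℝ g y (b i)) y (b i)) ⋆ φ) x := by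
        simp only [convolution_lsmul, smul_eq_mul,
          laplacian_eq_sum_fderiv_fderiv b hg.contDiffAt, Finset.sum_mul]
        exact integral_finsetSum _ fun i _ =>
          hc.convolutionExists_right (.lsmul ℝ ℝ) (hg₂ i).locallyIntegrable hφ.continuous x
    _ = ∑ i, (g ⋆ fun y => fderiv ℝ (fun y => fderiv ℝ φ y (b i)) y (b i)) x := by
        refine Finset.sum_congr rfl fun i _ => ?_
        rw [convolution_fderiv_apply_comm (by fun_prop) (hφ.of_le one_le_two) hc,
          convolution_fderiv_apply_comm (hg.of_le one_le_two) (by fun_prop)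
            (hc.fderiv_apply ℝ (b i))]

theorem continuousOn_convolution {X : Type*} [TopologicalSpace X] {f : X → E → ℝ} {s : Set X}
    (hf : ContinuousOn (fun p : X × E => f p.1 p.2) (s ×ˢ univ)) (hφ : Continuous φ)
    (hc : HasCompactSupport φ) :
    ContinuousOn (fun p : X × E => (f p.1 ⋆ φ) p.2) (s ×ˢ univ) := by
  simp only [convolution_lsmul_swap]
  refine continuousOn_integral_of_compact_support hc ?_ fun p y _ hy => by
    simp [image_eq_zero_of_notMem_tsupport hy]
  exact (hf.comp (f := fun q : (X × E) × E => (q.1.1, q.1.2 - q.2)) (by fun_prop)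
    fun q hq => ⟨hq.1.1, mem_univ _⟩).smul (by fun_prop)

namespace IsHeatSubsolutionOn

variable {I : Set ℝ} {f : ℝ → E → ℝ} {t : ℝ}

theorem hasDerivAt_convolution (hf : IsHeatSubsolutionOn I f)
    (hf' : ContinuousOn (fun p : ℝ × E => deriv (fun s => f s p.2) p.1) (I ×ˢ univ))
    (hI : IsOpen I) (hφ : Continuous φ) (hc : HasCompactSupport φ) (ht : t ∈ I) (x : E) :
    HasDerivAt (fun s => (f s ⋆ φ) x) (((fun y => deriv (fun s => f s y) t) ⋆ φ) x) t := by
  simp only [convolution_lsmul_swap]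
  refine hasDerivAt_integral_of_compact_support (F := fun s y => f s (x - y) • φ y)
    (F' := fun s y => deriv (fun s => f s (x - y)) s • φ y) hI ht hc ?_ ?_ ?_ ?_ ?_
  · exact fun s hs => ((hf.continuous hs).comp (by fun_prop)).smul hφ
  · exact (hf'.comp (f := fun q : ℝ × E => (q.1, x - q.2)) (by fun_prop)
      fun q hq => ⟨hq.1, mem_univ _⟩).smul (by fun_prop)
  · exact fun s hs y => (hf.differentiableAt s hs (x - y)).hasDerivAt.smul_const _
  all_goals
    intro s _ y hy
    simp [image_eq_zero_of_notMem_tsupport hy]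

theorem convolution (hf : IsHeatSubsolutionOn I f)
    (hf' : ContinuousOn (fun p : ℝ × E => deriv (fun s => f s p.2) p.1) (I ×ˢ univ))
    (hI : IsOpen I) (hφ : ContDiff ℝ 2 φ) (hc : HasCompactSupport φ) (hφ₀ : ∀ y, 0 ≤ φ y) :
    IsHeatSubsolutionOn I fun t => f t ⋆ φ where
  continuousOn := continuousOn_convolution hf.continuousOn hφ.continuous hc
  contDiff t ht :=
    hc.contDiff_convolution_right _ (hf.continuous ht).locallyIntegrable hφ
  differentiableAt t ht x :=
    (hf.hasDerivAt_convolution hf' hI hφ.continuous hc ht x).differentiableAt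
  deriv_le_laplacian t ht x := by
    rw [(hf.hasDerivAt_convolution hf' hI hφ.continuous hc ht x).deriv,
      laplacian_convolution (hf.continuous ht).locallyIntegrable hφ hc,
      ← convolution_laplacian_comm (hf.contDiff t ht) hφ hc]
    have hft : Continuous fun y => deriv (fun s => f s y) t := continuousOn_univ.1 <|
      hf'.comp (f := fun y => (t, y)) (by fun_prop) fun y _ => ⟨ht, mem_univ y⟩
    have hΔft := continuous_laplacian (hf.contDiff t ht)
    exact integral_mono
      (hc.convolutionExists_right (.lsmul ℝ ℝ) hft.locallyIntegrable hφ.continuous x)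
      (hc.convolutionExists_right (.lsmul ℝ ℝ) hΔft.locallyIntegrable hφ.continuous x)
      fun y => mul_le_mul_of_nonneg_right (hf.deriv_le_laplacian t ht y) (hφ₀ _)

end IsHeatSubsolutionOn

end Mollification

section UnitMollifier

variable {E : Type*} [NormedAddCommGroup E] [InnerProductSpace ℝ E] [FiniteDimensional ℝ E]

theorem laplacian_eq_zero_of_notMem_tsupport {φ : E → ℝ} {y : E} (hy : y ∉ tsupport φ) :
    Δ φ y = 0 := by
  have hφ : φ =ᶠ[𝓝 y] fun _ => 0 := notMem_tsupport_iff_eventuallyEq.1 hy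
  simp [(laplacian_congr_nhds hφ).self_of_nhds]

/-- A mollifier `φ` supported in the open unit ball, normalised so that `|φ| + |Δφ| ≤ 1` instead of
`∫ φ = 1`: then `φ + θ Δφ` is bounded by `1` for all `θ ∈ [0, 1]`. -/
structure IsUnitMollifier (φ : E → ℝ) : Prop where
  contDiff : ContDiff ℝ 2 φ
  nonneg : ∀ y, 0 ≤ φ y
  pos_zero : 0 < φ 0
  tsupport_subset : tsupport φ ⊆ ball 0 1
  abs_add_abs_laplacian_le : ∀ y, |φ y| + |Δ φ y| ≤ 1

variable (E) in
theorem exists_isUnitMollifier : ∃ φ : E → ℝ, IsUnitMollifier φ := by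
  let β : ContDiffBump (0 : E) := ⟨1 / 4, 1 / 2, by norm_num, by norm_num⟩
  have hβ : ContDiff ℝ 2 β := β.contDiff
  have hΔc : HasCompactSupport (Δ (β : E → ℝ)) :=
    .intro β.hasCompactSupport fun _ => laplacian_eq_zero_of_notMem_tsupport
  obtain ⟨C₁, hC₁⟩ := β.hasCompactSupport.exists_bound_of_continuous β.continuous
  obtain ⟨C₂, hC₂⟩ := hΔc.exists_bound_of_continuous (continuous_laplacian hβ)
  have hβ₀ : 0 < β 0 := β.pos_of_mem_ball (mem_ball_self β.rOut_pos)
  have hC₁pos : 0 < C₁ := hβ₀.trans_le ((le_abs_self _).trans (hC₁ 0))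
  have hC₂nn : 0 ≤ C₂ := (norm_nonneg _).trans (hC₂ 0)
  set c := (C₁ + C₂)⁻¹
  have hc : 0 < c := by positivity
  refine ⟨c • β, contDiff_const.smul hβ, fun y => mul_nonneg hc.le β.nonneg,
    mul_pos hc hβ₀, ?_, fun y => ?_⟩
  · refine (tsupport_smul_subset_right (fun _ => c) β).trans ?_
    rw [β.tsupport_eq]
    exact closedBall_subset_ball (by norm_num)
  · rw [laplacian_smul c hβ.contDiffAt, Pi.smul_apply, smul_eq_mul, smul_eq_mul, abs_mul, abs_mul,
      abs_of_pos hc, ← mul_add, inv_mul_le_one₀ (by positivity)]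
    exact add_le_add (hC₁ y) (hC₂ y)

namespace IsUnitMollifier

variable {φ : E → ℝ}

theorem hasCompactSupport (hφ : IsUnitMollifier φ) : HasCompactSupport φ :=
  (isCompact_closedBall 0 1).of_isClosed_subset (isClosed_tsupport φ)
    (hφ.tsupport_subset.trans ball_subset_closedBall)

theorem hasCompactSupport_laplacian (hφ : IsUnitMollifier φ) : HasCompactSupport (Δ φ) :=
  .intro hφ.hasCompactSupport fun _ => laplacian_eq_zero_of_notMem_tsupport

theorem abs_add_smul_laplacian_le (hφ : IsUnitMollifier φ) {θ : ℝ} (hθ : θ ∈ Icc (0 : ℝ) 1)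
    (y : E) : |(φ + θ • Δ φ) y| ≤ 1 := by
  calc |φ y + θ * Δ φ y| ≤ |φ y| + |θ * Δ φ y| := abs_add_le _ _
    _ ≤ |φ y| + |Δ φ y| := by
      rw [abs_mul, abs_of_nonneg hθ.1]
      gcongr
      exact mul_le_of_le_one_left (abs_nonneg _) hθ.2
    _ ≤ 1 := hφ.abs_add_abs_laplacian_le y

theorem add_smul_laplacian_eq_zero (hφ : IsUnitMollifier φ) (θ : ℝ) {y : E} (hy : y ∉ ball 0 1) :
    (φ + θ • Δ φ) y = 0 := by
  have hy' := notMem_subset hφ.tsupport_subset hy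
  simp [image_eq_zero_of_notMem_tsupport hy', laplacian_eq_zero_of_notMem_tsupport hy']

end IsUnitMollifier

end UnitMollifier

section LocalBounds

variable {E : Type*} [NormedAddCommGroup E] [InnerProductSpace ℝ E] [FiniteDimensional ℝ E]
  [MeasurableSpace E] [BorelSpace E]

theorem enorm_convolution_le {g ψ : E → ℝ} (hψ : ∀ y, |ψ y| ≤ 1) (hψ₀ : ∀ y ∉ ball 0 1, ψ y = 0)
    {η : ℝ} (hη : 0 < η) {r : ℝ} {x : E} (hx : ‖x‖ + 1 ≤ r) :
    ‖(g ⋆ ψ) x‖ₑ ≤ ENNReal.ofReal η * volume (ball (0 : E) 1) +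
      ENNReal.ofReal η⁻¹ * ∫⁻ z in ball 0 r, ENNReal.ofReal (g z ^ 2) := by
  have hpt (z : E) : ‖g z * ψ (x - z)‖ₑ ≤ (ball x 1).indicator
      (fun z => ENNReal.ofReal η + ENNReal.ofReal η⁻¹ * ENNReal.ofReal (g z ^ 2)) z := by
    by_cases hz : z ∈ ball x 1
    · rw [indicator_of_mem hz, Real.enorm_eq_ofReal_abs, ← ENNReal.ofReal_mul (by positivity),
        ← ENNReal.ofReal_add hη.le (by positivity)]
      refine ENNReal.ofReal_le_ofReal ?_
      have hamgm : |g z| ≤ η + η⁻¹ * g z ^ 2 := by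
        rw [← sq_abs, inv_mul_eq_div, ← sub_le_iff_le_add', le_div_iff₀ hη]
        nlinarith [sq_nonneg (|g z| - η), mul_nonneg hη.le (abs_nonneg (g z))]
      rw [abs_mul]
      exact (mul_le_of_le_one_right (abs_nonneg _) (hψ _)).trans hamgm
    · rw [hψ₀ (x - z) (by simpa [dist_eq_norm, norm_sub_rev] using hz)]
      simp
  have hball : ball x 1 ⊆ ball 0 r := ball_subset_ball' (by simpa [add_comm] using hx)
  calc ‖(g ⋆ ψ) x‖ₑ ≤ ∫⁻ z, ‖g z * ψ (x - z)‖ₑ := enorm_integral_le_lintegral_enorm _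
    _ ≤ ∫⁻ z in ball x 1, ENNReal.ofReal η + ENNReal.ofReal η⁻¹ * ENNReal.ofReal (g z ^ 2) := by
      rw [← lintegral_indicator measurableSet_ball]
      exact lintegral_mono hpt
    _ = ENNReal.ofReal η * volume (ball (0 : E) 1) +
        ENNReal.ofReal η⁻¹ * ∫⁻ z in ball x 1, ENNReal.ofReal (g z ^ 2) := by
      rw [lintegral_add_left measurable_const, setLIntegral_const,
        lintegral_const_mul' _ _ ENNReal.ofReal_ne_top, Measure.addHaar_ball_center]
    _ ≤ _ := by gcongr

variable {f : ℝ → E → ℝ} {φ : E → ℝ}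

theorem IsUnitMollifier.eventually_convolution_le (hφ : IsUnitMollifier φ)
    (hinit : ∀ R > 0, Tendsto (fun t => ∫⁻ x in ball 0 R, ENNReal.ofReal (f t x ^ 2))
      (𝓝[>] 0) (𝓝 0)) (R : ℝ) {ε : ℝ} (hε : 0 < ε) :
    ∀ᶠ t in 𝓝[>] 0, ∀ x ∈ closedBall (0 : E) R, (f t ⋆ φ) x ≤ ε := by
  set v := (volume (ball (0 : E) 1)).toReal
  have hv : volume (ball (0 : E) 1) = ENNReal.ofReal v :=
    (ENNReal.ofReal_toReal measure_ball_lt_top.ne).symm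
  set η := ε / 2 / (v + 1)
  have hη : 0 < η := by positivity
  have hηv : η * v ≤ ε / 2 := by
    calc η * v ≤ η * (v + 1) := by gcongr; linarith
      _ = ε / 2 := div_mul_cancel₀ _ (by positivity)
  filter_upwards [(hinit (max R 0 + 1) (by positivity)).eventually_lt_const
    (ENNReal.ofReal_pos.2 (show 0 < η * (ε / 2) by positivity))] with t ht x hx
  have hx' : ‖x‖ + 1 ≤ max R 0 + 1 := by
    gcongr
    exact (mem_closedBall_zero_iff.1 hx).trans (le_max_left R 0)
  have hψ := hφ.abs_add_smul_laplacian_le (θ := 0) (by simp)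
  have hψ₀ := fun y (hy : y ∉ ball 0 1) => hφ.add_smul_laplacian_eq_zero 0 hy
  rw [zero_smul, add_zero] at hψ hψ₀
  rw [← ENNReal.ofReal_le_ofReal_iff hε.le]
  calc ENNReal.ofReal ((f t ⋆ φ) x) ≤ ‖(f t ⋆ φ) x‖ₑ := Real.ofReal_le_enorm _
    _ ≤ ENNReal.ofReal η * ENNReal.ofReal v +
        ENNReal.ofReal η⁻¹ * ENNReal.ofReal (η * (ε / 2)) := by
      rw [← hv]
      exact (enorm_convolution_le hψ hψ₀ hη hx').trans (by gcongr)
    _ = ENNReal.ofReal (η * v + η⁻¹ * (η * (ε / 2))) := by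
      rw [← ENNReal.ofReal_mul hη.le, ← ENNReal.ofReal_mul (by positivity),
        ← ENNReal.ofReal_add (by positivity) (by positivity)]
    _ ≤ ENNReal.ofReal ε := by
      rw [inv_mul_cancel_left₀ hη.ne']
      exact ENNReal.ofReal_le_ofReal (by linarith)

end LocalBounds

section TimeAverage

theorem setLIntegral_Ioc_half_le {J : ℝ → ENNReal} {a t : ℝ} {N : ℕ} (haN : a ≤ N)
    (ht : t ∈ Ioo (0 : ℝ) 1) :
    ∫⁻ s in Ioc (t / 2) t, J s ≤
      ENNReal.ofReal ((2 / t) ^ N) * ∫⁻ s in Ioc (0 : ℝ) 1, ENNReal.ofReal (s ^ a) * J s := by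
  have ht₀ := ht.1
  have hweight : ∀ s ∈ Ioc (t / 2) t, 1 ≤ (2 / t) ^ N * s ^ a := fun s hs => by
    have hs₀ : 0 < s := (half_pos ht₀).trans hs.1
    calc (1 : ℝ) = (2 / t) ^ N * (t / 2) ^ N := by
          rw [← mul_pow, div_mul_div_cancel₀ ht₀.ne', div_self two_ne_zero, one_pow]
      _ ≤ (2 / t) ^ N * s ^ a := by
        gcongr
        calc (t / 2) ^ N ≤ s ^ N := pow_le_pow_left₀ (half_pos ht₀).le hs.1.le N
          _ = s ^ (N : ℝ) := (Real.rpow_natCast s N).symm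
          _ ≤ s ^ a := Real.rpow_le_rpow_of_exponent_ge hs₀ (hs.2.trans ht.2.le) haN
  calc ∫⁻ s in Ioc (t / 2) t, J s
      ≤ ∫⁻ s in Ioc (t / 2) t, ENNReal.ofReal ((2 / t) ^ N) * (ENNReal.ofReal (s ^ a) * J s) := by
        refine setLIntegral_mono' measurableSet_Ioc fun s hs => ?_
        rw [← mul_assoc, ← ENNReal.ofReal_mul (by positivity)]
        exact le_mul_of_one_le_left' (ENNReal.one_le_ofReal.2 (hweight s hs))
    _ = ENNReal.ofReal ((2 / t) ^ N) * ∫⁻ s in Ioc (t / 2) t, ENNReal.ofReal (s ^ a) * J s :=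
        lintegral_const_mul' _ _ ENNReal.ofReal_ne_top
    _ ≤ _ := by
        gcongr
        exacts [(half_pos ht₀).le, ht.2.le]

variable {E : Type*} [NormedAddCommGroup E] [InnerProductSpace ℝ E] [FiniteDimensional ℝ E]
  [MeasurableSpace E] [BorelSpace E] {f : ℝ → E → ℝ} {φ : E → ℝ} {I : Set ℝ} {t₀ t r : ℝ} {x : E}

theorem IsUnitMollifier.convolution_add_smul_laplacian (hφ : IsUnitMollifier φ) {g : E → ℝ}
    (hg : LocallyIntegrable g) (θ : ℝ) (x : E) :
    (g ⋆ (φ + θ • Δ φ)) x = (g ⋆ φ) x + θ * (g ⋆ Δ φ) x := by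
  have hc : HasCompactSupport (θ • Δ φ) :=
    hφ.hasCompactSupport_laplacian.smul_left (f := fun _ => θ)
  rw [(hφ.hasCompactSupport.convolutionExists_right _ hg hφ.contDiff.continuous x).distrib_add
    (hc.convolutionExists_right _ hg ((continuous_laplacian hφ.contDiff).const_smul θ) x),
    convolution_smul, Pi.smul_apply, smul_eq_mul]

namespace IsHeatSubsolutionOn

theorem sub_mul_convolution_le_integral (hf : IsHeatSubsolutionOn I f)
    (hf' : ContinuousOn (fun p : ℝ × E => deriv (fun s => f s p.2) p.1) (I ×ˢ univ))
    (hI : IsOpen I) (hφ : IsUnitMollifier φ) (ht₀ : t₀ ≤ t) (ht₀I : Icc t₀ t ⊆ I) (x : E) :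
    (t - t₀) * (f t ⋆ φ) x ≤ ∫ s in t₀..t, (f s ⋆ (φ + (s - t₀) • Δ φ)) x := by
  have hW := hf.convolution hf' hI hφ.contDiff hφ.hasCompactSupport hφ.nonneg
  have hΔφ := continuous_laplacian hφ.contDiff
  have hsplit : ∀ s ∈ I, (f s ⋆ (φ + (s - t₀) • Δ φ)) x =
      (f s ⋆ φ) x + (s - t₀) * (f s ⋆ Δ φ) x := fun s hs =>
    hφ.convolution_add_smul_laplacian (hf.continuous hs).locallyIntegrable (s - t₀) x
  have hcont {ψ : E → ℝ} (hψ : Continuous ψ) (hψc : HasCompactSupport ψ) :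
      ContinuousOn (fun s => (f s ⋆ ψ) x) (Icc t₀ t) :=
    (continuousOn_convolution hf.continuousOn hψ hψc).comp (f := fun s => (s, x)) (by fun_prop)
      fun s hs => ⟨ht₀I hs, mem_univ x⟩
  have hWc := hcont hφ.contDiff.continuous hφ.hasCompactSupport
  have hlin : ContinuousOn (fun s => s - t₀) (Icc t₀ t) := by fun_prop
  have hG : ContinuousOn (fun s => (f s ⋆ (φ + (s - t₀) • Δ φ)) x) (Icc t₀ t) :=
    (hWc.add (hlin.mul (hcont hΔφ hφ.hasCompactSupport_laplacian))).congr
      fun s hs => hsplit s (ht₀I hs)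
  simpa using intervalIntegral.sub_le_integral_of_hasDeriv_right_of_le ht₀ (hlin.mul hWc)
    (fun s hs => (((hasDerivAt_id s).sub_const t₀).mul
      (hW.differentiableAt s (ht₀I (Ioo_subset_Icc_self hs)) x).hasDerivAt).hasDerivWithinAt)
    hG.integrableOn_Icc fun s hs => by
      have hsI := ht₀I (Ioo_subset_Icc_self hs)
      have hle := hW.deriv_le_laplacian s hsI x
      rw [laplacian_convolution (hf.continuous hsI).locallyIntegrable hφ.contDiff
        hφ.hasCompactSupport] at hle
      rw [hsplit s hsI, one_mul, id]
      gcongr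
      exact sub_nonneg.2 hs.1.le

theorem ofReal_sub_mul_convolution_le (hf : IsHeatSubsolutionOn I f)
    (hf' : ContinuousOn (fun p : ℝ × E => deriv (fun s => f s p.2) p.1) (I ×ˢ univ))
    (hI : IsOpen I) (hφ : IsUnitMollifier φ) (ht₀ : t₀ ≤ t) (ht₀I : Icc t₀ t ⊆ I)
    (ht : t ≤ t₀ + 1) (hx : ‖x‖ + 1 ≤ r) :
    ENNReal.ofReal ((t - t₀) * (f t ⋆ φ) x) ≤ ENNReal.ofReal (t - t₀) * volume (ball (0 : E) 1) +
      ∫⁻ s in Ioc t₀ t, ∫⁻ z in ball 0 r, ENNReal.ofReal (f s z ^ 2) := by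
  calc ENNReal.ofReal ((t - t₀) * (f t ⋆ φ) x)
      ≤ ‖∫ s in Ioc t₀ t, (f s ⋆ (φ + (s - t₀) • Δ φ)) x‖ₑ := by
        rw [← intervalIntegral.integral_of_le ht₀]
        exact (ENNReal.ofReal_le_ofReal
          (hf.sub_mul_convolution_le_integral hf' hI hφ ht₀ ht₀I x)).trans (Real.ofReal_le_enorm _)
    _ ≤ ∫⁻ s in Ioc t₀ t, ‖(f s ⋆ (φ + (s - t₀) • Δ φ)) x‖ₑ := enorm_integral_le_lintegral_enorm _
    _ ≤ ∫⁻ s in Ioc t₀ t, (volume (ball (0 : E) 1) +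
          ∫⁻ z in ball 0 r, ENNReal.ofReal (f s z ^ 2)) := by
        refine setLIntegral_mono' measurableSet_Ioc fun s hs => ?_
        have hθ : s - t₀ ∈ Icc (0 : ℝ) 1 := ⟨by linarith [hs.1], by linarith [hs.2]⟩
        simpa using enorm_convolution_le (g := f s) (hφ.abs_add_smul_laplacian_le hθ)
          (fun y hy => hφ.add_smul_laplacian_eq_zero (s - t₀) hy) one_pos hx
    _ = _ := by
        rw [lintegral_add_left measurable_const, setLIntegral_const, Real.volume_Ioc, mul_comm]

theorem convolution_le_div_pow (hf : IsHeatSubsolutionOn (Ioo 0 1) f)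
    (hf' : ContinuousOn (fun p : ℝ × E => deriv (fun s => f s p.2) p.1) (Ioo 0 1 ×ˢ univ))
    (hφ : IsUnitMollifier φ) {a C : ℝ} {N : ℕ} (haN : a ≤ N) (hC : 1 ≤ C)
    (hgrowth : ∫⁻ s in Ioc (0 : ℝ) 1, ENNReal.ofReal (s ^ a) *
      ∫⁻ z in ball (0 : E) r, ENNReal.ofReal (f s z ^ 2) ≤ ENNReal.ofReal C)
    (ht : t ∈ Ioo (0 : ℝ) 1) (hx : ‖x‖ + 1 ≤ r) :
    (f t ⋆ φ) x ≤ (volume.real (ball (0 : E) 1) + 2 ^ (N + 1)) * C / t ^ (N + 1) := by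
  have ht₀ := ht.1
  set v := volume.real (ball (0 : E) 1)
  have hv₀ : 0 ≤ v := measureReal_nonneg
  have hv : volume (ball (0 : E) 1) = ENNReal.ofReal v :=
    (ENNReal.ofReal_toReal measure_ball_lt_top.ne).symm
  have hmean := hf.ofReal_sub_mul_convolution_le hf' isOpen_Ioo hφ (half_le_self ht₀.le)
    (fun s hs => ⟨(half_pos ht₀).trans_le hs.1, hs.2.trans_lt ht.2⟩) (by linarith [ht.2]) hx
  have hbound : t / 2 * (f t ⋆ φ) x ≤ t / 2 * v + (2 / t) ^ N * C := by
    rw [← ENNReal.ofReal_le_ofReal_iff (by positivity), ENNReal.ofReal_add (by positivity)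
      (by positivity), ENNReal.ofReal_mul (q := v) (by positivity),
      ENNReal.ofReal_mul (q := C) (by positivity), ← hv]
    rw [sub_half] at hmean
    refine hmean.trans ?_
    gcongr
    exact (setLIntegral_Ioc_half_le haN ht).trans (by gcongr)
  have hpow : 1 ≤ (t ^ (N + 1))⁻¹ := (one_le_inv₀ (by positivity)).2 (pow_le_one₀ ht₀.le ht.2.le)
  calc (f t ⋆ φ) x ≤ v + 2 / t * ((2 / t) ^ N * C) := by
        refine le_of_mul_le_mul_left (hbound.trans_eq ?_) (half_pos ht₀)
        field_simp
    _ = v * 1 * 1 + 2 ^ (N + 1) * C * (t ^ (N + 1))⁻¹ := by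
        rw [← mul_assoc, ← pow_succ', div_pow]
        ring
    _ ≤ v * C * (t ^ (N + 1))⁻¹ + 2 ^ (N + 1) * C * (t ^ (N + 1))⁻¹ := by gcongr
    _ = _ := by ring

end IsHeatSubsolutionOn

end TimeAverage

section Vanishing

variable {E : Type*} [NormedAddCommGroup E] [InnerProductSpace ℝ E] [FiniteDimensional ℝ E]
  [MeasurableSpace E] [BorelSpace E] {f : ℝ → E → ℝ} {φ : E → ℝ} {L : ℝ → ℝ} {a : ℝ}

namespace IsHeatSubsolutionOn

theorem exists_convolution_le_exp_add (hf : IsHeatSubsolutionOn (Ioo 0 1) f)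
    (hf' : ContinuousOn (fun p : ℝ × E => deriv (fun s => f s p.2) p.1) (Ioo 0 1 ×ˢ univ))
    (hφ : IsUnitMollifier φ)
    (hinit : ∀ R > 0, Tendsto (fun t => ∫⁻ x in ball 0 R, ENNReal.ofReal (f t x ^ 2))
      (𝓝[>] 0) (𝓝 0))
    (hL_pos : ∀ r, 1 ≤ r → 0 < L r)
    (hgrowth : ∀ r, 1 ≤ r → ∫⁻ t in Ioc (0 : ℝ) 1, ENNReal.ofReal (t ^ a) *
      ∫⁻ x in ball 0 r, ENNReal.ofReal (f t x ^ 2) ≤ ENNReal.ofReal (Real.exp (L r))) :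
    ∃ C, 0 ≤ C ∧ ∀ r x, ‖x‖ + 2 ≤ r → ∀ t ∈ Ioo 0 1, (f t ⋆ φ) x ≤ Real.exp (L r + C) := by
  set N := ⌈a⌉₊
  set b := volume.real (ball (0 : E) 1) + 2 ^ (N + 1)
  have hb : 1 ≤ b := (one_le_pow₀ one_le_two).trans (le_add_of_nonneg_left measureReal_nonneg)
  set D : ℝ := 8 * (4 * (N + 1 : ℕ)) * (4 * (N + 1 : ℕ) + 1 + Module.finrank ℝ E)
  have hD : 0 ≤ D := by positivity
  refine ⟨Real.log b + D, add_nonneg (Real.log_nonneg hb) hD, fun r x hx t ht => ?_⟩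
  have hr : 1 ≤ r := by linarith [norm_nonneg x]
  have hexp : 1 ≤ Real.exp (L r) := Real.one_le_exp (hL_pos r hr).le
  have hball {y : E} (hy : y ∈ closedBall x 1) : ‖y‖ ≤ ‖x‖ + 1 := by
    linarith [norm_le_norm_add_norm_sub' y x, mem_closedBall_iff_norm.1 hy]
  have hW := hf.convolution hf' isOpen_Ioo hφ.contDiff hφ.hasCompactSupport hφ.nonneg
  calc (f t ⋆ φ) x ≤ b * Real.exp (L r) * Real.exp (D * √t) := by
        refine hW.le_mul_exp_sqrt_of_le_div_pow (by positivity) N.succ_ne_zero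
          (fun s hs y hy => ?_) (fun ε hε => ?_) ht
        · exact hf.convolution_le_div_pow hf' hφ (Nat.le_ceil a) hexp (hgrowth r hr) hs
            (by linarith [hball hy])
        · filter_upwards [hφ.eventually_convolution_le hinit (‖x‖ + 1) hε] with s hs y hy
          exact hs y (mem_closedBall_zero_iff.2 (hball hy))
    _ ≤ b * Real.exp (L r) * Real.exp (D * 1) := by
        gcongr
        exact Real.sqrt_le_one.2 ht.2.le
    _ = Real.exp (L r + (Real.log b + D)) := by
        rw [Real.exp_add, Real.exp_add, Real.exp_log (by positivity)]
        ring_nf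

theorem convolution_nonpos (hf : IsHeatSubsolutionOn (Ioo 0 1) f)
    (hf' : ContinuousOn (fun p : ℝ × E => deriv (fun s => f s p.2) p.1) (Ioo 0 1 ×ˢ univ))
    (hφ : IsUnitMollifier φ)
    (hinit : ∀ R > 0, Tendsto (fun t => ∫⁻ x in ball 0 R, ENNReal.ofReal (f t x ^ 2))
      (𝓝[>] 0) (𝓝 0))
    (hL_pos : ∀ r, 1 ≤ r → 0 < L r) (hL_mono : MonotoneOn L (Ici 1))
    (hL_div : ∫⁻ r in Ioi (1 : ℝ), ENNReal.ofReal (r / L r) = ⊤)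
    (hgrowth : ∀ r, 1 ≤ r → ∫⁻ t in Ioc (0 : ℝ) 1, ENNReal.ofReal (t ^ a) *
      ∫⁻ x in ball 0 r, ENNReal.ofReal (f t x ^ 2) ≤ ENNReal.ofReal (Real.exp (L r)))
    {t : ℝ} (ht : t ∈ Ioo (0 : ℝ) 1) (x : E) : (f t ⋆ φ) x ≤ 0 := by
  obtain ⟨C, hC, hbound⟩ := hf.exists_convolution_le_exp_add hf' hφ hinit hL_pos hgrowth
  have hℓ (k : ℕ) : 0 < L (2 ^ (k + 2)) := hL_pos _ (one_le_pow₀ one_le_two)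
  have hlin (k : ℕ) : (0 : ℝ) ≤ k + 1 + C := by positivity
  -- The summand `k + 1` makes `∑ exp (-Λ k)` converge without affecting `∑ 4 ^ k / Λ k = ∞`.
  refine (hf.convolution hf' isOpen_Ioo hφ.contDiff hφ.hasCompactSupport
    hφ.nonneg).nonpos_of_not_summable (Λ := fun k => L (2 ^ (k + 2)) + (k + 1 + C))
    (fun k => by linarith [hℓ k, k.cast_nonneg (α := ℝ)]) ?_ (fun k s hs y hy => ?_)
    (fun R ε hε => hφ.eventually_convolution_le hinit R hε) ?_ ht x
  · refine Real.summable_exp_neg_nat.of_nonneg_of_le (fun k => (Real.exp_pos _).le) fun k => ?_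
    exact Real.exp_le_exp.2 (by linarith [hℓ k])
  · refine (hbound (2 ^ (k + 2)) y ?_ s hs).trans (Real.exp_le_exp.2 ?_)
    · have hk : (1 : ℝ) ≤ 2 ^ k := one_le_pow₀ one_le_two
      have hy' := mem_closedBall_zero_iff.1 hy
      rw [pow_succ] at hy'
      rw [pow_add]
      linarith
    · linarith [k.cast_nonneg (α := ℝ)]
  · refine not_summable_div_add_of_le_mul (M := 2 + C) (by positivity) (fun k => by positivity) hℓ
      hlin (fun k => ?_) (not_summable_four_pow_div_shift 2
        (not_summable_four_pow_div hL_pos hL_mono hL_div))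
    have h₁ : (1 : ℝ) ≤ 4 ^ k := one_le_pow₀ (by norm_num)
    have hk : (k : ℝ) ≤ 4 ^ k := by exact_mod_cast (Nat.lt_pow_self (by norm_num)).le
    nlinarith

theorem eq_zero_of_nonneg (hf : IsHeatSubsolutionOn (Ioo 0 1) f)
    (hf' : ContinuousOn (fun p : ℝ × E => deriv (fun s => f s p.2) p.1) (Ioo 0 1 ×ˢ univ))
    (hf₀ : ∀ t x, 0 ≤ f t x)
    (hinit : ∀ R > 0, Tendsto (fun t => ∫⁻ x in ball 0 R, ENNReal.ofReal (f t x ^ 2))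
      (𝓝[>] 0) (𝓝 0))
    (hL_pos : ∀ r, 1 ≤ r → 0 < L r) (hL_mono : MonotoneOn L (Ici 1))
    (hL_div : ∫⁻ r in Ioi (1 : ℝ), ENNReal.ofReal (r / L r) = ⊤)
    (hgrowth : ∀ r, 1 ≤ r → ∫⁻ t in Ioc (0 : ℝ) 1, ENNReal.ofReal (t ^ a) *
      ∫⁻ x in ball 0 r, ENNReal.ofReal (f t x ^ 2) ≤ ENNReal.ofReal (Real.exp (L r)))
    {t : ℝ} (ht : t ∈ Ioo (0 : ℝ) 1) (x : E) : f t x = 0 := by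
  obtain ⟨φ, hφ⟩ := exists_isUnitMollifier E
  by_contra hne
  have hconv := hf.convolution_nonpos hf' hφ hinit hL_pos hL_mono hL_div hgrowth ht x
  have hcont : Continuous fun y => f t y * φ (x - y) :=
    (hf.continuous ht).mul (hφ.contDiff.continuous.comp (continuous_sub_left x))
  refine hconv.not_gt (hcont.integral_pos_of_hasCompactSupport_nonneg_nonzero
    (hφ.hasCompactSupport.comp_homeomorph (Homeomorph.subLeft x)).mul_left
    (fun y => mul_nonneg (hf₀ t y) (hφ.nonneg _)) (x := x) ?_)
  simpa using ⟨hne, hφ.pos_zero.ne'⟩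

end IsHeatSubsolutionOn

end Vanishing

section TimeSlices

variable {F : Type*} [NormedAddCommGroup F] [NormedSpace ℝ F] {n : ℕ∞ω} {I : Set ℝ} {f : ℝ → F → ℝ}

theorem contDiff_of_contDiffOn_prod_univ
    (hf : ContDiffOn ℝ n (fun p : ℝ × F => f p.1 p.2) (I ×ˢ univ)) {t : ℝ} (ht : t ∈ I) :
    ContDiff ℝ n (f t) :=
  contDiffOn_univ.1 <| hf.comp (f := fun x => (t, x)) (by fun_prop) fun x _ => ⟨ht, mem_univ x⟩

theorem continuousOn_deriv_fst (hn : n ≠ 0) (hI : IsOpen I)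
    (hf : ContDiffOn ℝ n (fun p : ℝ × F => f p.1 p.2) (I ×ˢ univ)) :
    ContinuousOn (fun p : ℝ × F => deriv (fun s => f s p.2) p.1) (I ×ˢ univ) := by
  have hopen := hI.prod (isOpen_univ (X := F))
  refine ((hf.continuousOn_fderiv_of_isOpen hopen (ENat.one_le_iff_ne_zero_withTop.2 hn)).clm_apply
    (continuousOn_const (c := (1, 0)))).congr fun p hp => ?_
  have hpair : HasDerivAt (fun s => (s, p.2)) (1, 0) p.1 :=
    (hasDerivAt_id p.1).prodMk (hasDerivAt_const p.1 p.2)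
  exact (((hf.contDiffAt (hopen.mem_nhds hp)).differentiableAt hn).hasFDerivAt.comp_hasDerivAt
    (f := fun s => (s, p.2)) p.1 hpair).deriv

end TimeSlices

section PositivePart

/-- The primitive of `Real.smoothTransition` vanishing at `0`: a smooth convex nondecreasing
minorant of `max s 0` with the same positivity set. Composing a subsolution with it replaces taking
the positive part, which would leave the class of classical subsolutions. -/
noncomputable def smoothPosPart (s : ℝ) : ℝ :=
  ∫ r in (0 : ℝ)..s, Real.smoothTransition r

theorem deriv_smoothPosPart : deriv smoothPosPart = Real.smoothTransition :=
  funext fun s => Real.smoothTransition.continuous.deriv_integral _ 0 s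

theorem contDiff_smoothPosPart : ContDiff ℝ ∞ smoothPosPart := by
  refine contDiff_infty_iff_deriv.2 ⟨fun s => ?_, ?_⟩
  · have hs := Real.smoothTransition.continuous.integral_hasStrictDerivAt 0 s
    exact hs.hasDerivAt.differentiableAt
  · rw [deriv_smoothPosPart]
    exact Real.smoothTransition.contDiff

theorem smoothPosPart_of_nonpos {s : ℝ} (hs : s ≤ 0) : smoothPosPart s = 0 := by
  rw [smoothPosPart, intervalIntegral.integral_symm, neg_eq_zero]
  refine (intervalIntegral.integral_congr (g := fun _ => (0 : ℝ)) fun r hr => ?_).trans (by simp)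
  rw [uIcc_of_le hs] at hr
  exact Real.smoothTransition.zero_of_nonpos hr.2

theorem smoothPosPart_pos {s : ℝ} (hs : 0 < s) : 0 < smoothPosPart s :=
  intervalIntegral.intervalIntegral_pos_of_pos_on
    (Real.smoothTransition.continuous.intervalIntegrable _ _)
    (fun _ hr => Real.smoothTransition.pos_of_pos hr.1) hs

theorem smoothPosPart_nonneg (s : ℝ) : 0 ≤ smoothPosPart s := by
  rcases le_or_gt s 0 with hs | hs
  · exact (smoothPosPart_of_nonpos hs).ge
  · exact (smoothPosPart_pos hs).le

theorem smoothPosPart_le_max (s : ℝ) : smoothPosPart s ≤ max s 0 := by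
  rcases le_total s 0 with hs | hs
  · rw [smoothPosPart_of_nonpos hs]
    exact le_max_right _ _
  · calc smoothPosPart s ≤ ∫ _ in (0 : ℝ)..s, (1 : ℝ) :=
        intervalIntegral.integral_mono_on hs
          (Real.smoothTransition.continuous.intervalIntegrable _ _) (by simp)
          fun r _ => Real.smoothTransition.le_one r
      _ ≤ max s 0 := by simp

variable {E : Type*} [NormedAddCommGroup E] [InnerProductSpace ℝ E] [FiniteDimensional ℝ E]
  {I : Set ℝ} {f : ℝ → E → ℝ}

namespace IsHeatSubsolutionOn

theorem of_contDiffOn (hI : IsOpen I)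
    (hf : ContDiffOn ℝ 2 (fun p : ℝ × E => f p.1 p.2) (I ×ˢ univ))
    (hsub : ∀ t ∈ I, ∀ x, deriv (fun s => f s x) t ≤ Δ (f t) x) : IsHeatSubsolutionOn I f where
  continuousOn := hf.continuousOn
  contDiff t ht := contDiff_of_contDiffOn_prod_univ hf ht
  differentiableAt t ht x :=
    (hf.comp (f := fun s => (s, x)) (s := I) (by fun_prop) fun s hs =>
      ⟨hs, mem_univ x⟩).contDiffAt (hI.mem_nhds ht) |>.differentiableAt two_ne_zero
  deriv_le_laplacian := hsub

theorem comp (hf : IsHeatSubsolutionOn I f) {η : ℝ → ℝ} (hη : ContDiff ℝ 2 η)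
    (hη₁ : ∀ s, 0 ≤ deriv η s) (hη₂ : ∀ s, 0 ≤ iteratedDeriv 2 η s) :
    IsHeatSubsolutionOn I fun t x => η (f t x) where
  continuousOn := hη.continuous.comp_continuousOn hf.continuousOn
  contDiff t ht := hη.comp (hf.contDiff t ht)
  differentiableAt t ht x := (hη.differentiable two_ne_zero _).comp t (hf.differentiableAt t ht x)
  deriv_le_laplacian t ht x := by
    calc deriv (fun s => η (f s x)) t = deriv η (f t x) * deriv (fun s => f s x) t :=
          deriv_comp (h₂ := η) t (hη.differentiable two_ne_zero _) (hf.differentiableAt t ht x)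
      _ ≤ deriv η (f t x) * Δ (f t) x :=
          mul_le_mul_of_nonneg_left (hf.deriv_le_laplacian t ht x) (hη₁ _)
      _ ≤ Δ (fun y => η (f t y)) x := by
          rw [laplacian_comp hη.contDiffAt (hf.contDiff t ht).contDiffAt]
          exact le_add_of_nonneg_left (mul_nonneg (hη₂ _) (sq_nonneg _))

theorem smoothPosPart (hf : IsHeatSubsolutionOn I f) :
    IsHeatSubsolutionOn I fun t x => smoothPosPart (f t x) := by
  refine hf.comp (contDiff_smoothPosPart.of_le ENat.LEInfty.out) (fun s => ?_) fun s => ?_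
  · rw [deriv_smoothPosPart]
    exact Real.smoothTransition.nonneg s
  · rw [iteratedDeriv_succ, iteratedDeriv_one, deriv_smoothPosPart]
    exact Real.smoothTransition.monotone.deriv_nonneg

end IsHeatSubsolutionOn

end PositivePart

theorem heat_maximum_principle_time_weighted_L2_general {E : Type*} [NormedAddCommGroup E]
    [InnerProductSpace ℝ E] [FiniteDimensional ℝ E] [MeasurableSpace E] [BorelSpace E]
    {u : ℝ → E → ℝ} {L : ℝ → ℝ} {a : ℝ}
    (hu : ContDiffOn ℝ 2 (fun p : ℝ × E => u p.1 p.2) (Ioc 0 1 ×ˢ univ))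
    (hsub : ∀ t ∈ Ioo (0 : ℝ) 1, ∀ x, deriv (fun s => u s x) t ≤ Δ (u t) x)
    (hinit : ∀ R > 0, Tendsto (fun t => ∫⁻ x in ball 0 R, ENNReal.ofReal (max (u t x) 0 ^ 2))
      (𝓝[>] 0) (𝓝 0))
    (hL_pos : ∀ r, 1 ≤ r → 0 < L r) (hL_mono : MonotoneOn L (Ici 1))
    (hL_div : ∫⁻ r in Ioi (1 : ℝ), ENNReal.ofReal (r / L r) = ⊤)
    (hgrowth : ∀ r, 1 ≤ r → ∫⁻ t in Ioc (0 : ℝ) 1, ENNReal.ofReal (t ^ a) *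
      ∫⁻ x in ball 0 r, ENNReal.ofReal (max (u t x) 0 ^ 2) ≤ ENNReal.ofReal (Real.exp (L r))) :
    ∀ t ∈ Ioc (0 : ℝ) 1, ∀ x, u t x ≤ 0 := by
  have huI := hu.mono (prod_mono Ioo_subset_Ioc_self (subset_refl univ))
  have hsq (t x) : ENNReal.ofReal (smoothPosPart (u t x) ^ 2) ≤
      ENNReal.ofReal (max (u t x) 0 ^ 2) := ENNReal.ofReal_le_ofReal
    (pow_le_pow_left₀ (smoothPosPart_nonneg _) (smoothPosPart_le_max _) 2)
  have hzero : ∀ t ∈ Ioo (0 : ℝ) 1, ∀ x, smoothPosPart (u t x) = 0 := fun t ht x =>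
    (IsHeatSubsolutionOn.of_contDiffOn isOpen_Ioo huI hsub).smoothPosPart.eq_zero_of_nonneg
      (continuousOn_deriv_fst (f := fun t x => smoothPosPart (u t x)) two_ne_zero isOpen_Ioo
        ((contDiff_smoothPosPart.of_le ENat.LEInfty.out).comp_contDiffOn huI))
      (fun _ _ => smoothPosPart_nonneg _)
      (fun R hR => tendsto_of_tendsto_of_tendsto_of_le_of_le tendsto_const_nhds (hinit R hR)
        (fun _ => zero_le) fun s => lintegral_mono (hsq s))
      hL_pos hL_mono hL_div
      (fun r hr => (lintegral_mono fun s => mul_le_mul_right (lintegral_mono (hsq s)) _).trans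
        (hgrowth r hr)) ht x
  have hnonpos : ∀ t ∈ Ioo (0 : ℝ) 1, ∀ x, u t x ≤ 0 := fun t ht x =>
    not_lt.1 fun h => (smoothPosPart_pos h).ne' (hzero t ht x)
  intro t ht x
  have hcont : ContinuousOn (fun s => u s x) (Ioc 0 1) :=
    hu.continuousOn.comp (f := fun s => (s, x)) (by fun_prop) fun s hs => ⟨hs, mem_univ x⟩
  have hclosure : t ∈ closure (Ioo (0 : ℝ) 1) := by
    rw [closure_Ioo zero_ne_one]
    exact Ioc_subset_Icc_self ht
  have := mem_closure_iff_nhdsWithin_neBot.1 hclosure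
  exact le_of_tendsto ((hcont t ht).mono_left (nhdsWithin_mono t Ioo_subset_Ioc_self))
    (eventually_mem_nhdsWithin.mono fun s hs => hnonpos s hs x)

theorem heatLap_eq_laplacian {n : ℕ} {g : EuclideanSpace ℝ (Fin n) → ℝ}
    {x : EuclideanSpace ℝ (Fin n)} (hg : ContDiffAt ℝ 2 g x) : heatLap g x = Δ g x := by
  simp [heatLap, laplacian_eq_sum_fderiv_fderiv (EuclideanSpace.basisFun (Fin n) ℝ) hg]

/-- **Maximum-principle form of Theorem 1 (Euclidean case).** If `u` is a smooth
subsolution of the heat equation on `ℝⁿ × (0,1]` whose positive part `u₊` tends to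
`0` in `L²_loc` as `t → 0⁺` and satisfies the time-weighted `L²` growth bound
`∫₀¹ tᵃ ∫_{B(0,r)} u₊² ≤ e^{L(r)}` with `∫₁^∞ r / L(r) dr = ∞`, then `u ≤ 0`. -/
theorem heat_maximum_principle_time_weighted_L2 {n : ℕ}
    (u : ℝ → EuclideanSpace ℝ (Fin n) → ℝ)
    (hu_smooth : ContDiffOn ℝ (⊤ : ℕ∞)
      (fun p : ℝ × EuclideanSpace ℝ (Fin n) => u p.1 p.2) (Set.Ioc (0:ℝ) 1 ×ˢ Set.univ))
    (hu_subsol : ∀ t ∈ Set.Ioc (0:ℝ) 1, ∀ x, deriv (fun s => u s x) t ≤ heatLap (u t) x)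
    (hu_init : ∀ R > (0:ℝ),
      Tendsto (fun t => ∫⁻ x in ball (0 : EuclideanSpace ℝ (Fin n)) R,
        ENNReal.ofReal ((max (u t x) 0) ^ 2)) (nhdsWithin 0 (Set.Ioi 0)) (nhds 0))
    (a : ℝ) (ha : 0 < a)
    (L : ℝ → ℝ)
    (hL_pos : ∀ r > (0:ℝ), 0 < L r)
    (hL_mono : ∀ r s : ℝ, 0 < r → r ≤ s → L r ≤ L s)
    (hL_div : ∫⁻ r in Set.Ioi (1:ℝ), ENNReal.ofReal (r / L r) = ⊤)
    (hu_growth : ∀ r > (0:ℝ),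
      ∫⁻ t in Set.Ioc (0:ℝ) 1, ENNReal.ofReal (t ^ a) *
        ∫⁻ x in ball (0 : EuclideanSpace ℝ (Fin n)) r,
          ENNReal.ofReal ((max (u t x) 0) ^ 2)
      ≤ ENNReal.ofReal (Real.exp (L r))) :
    ∀ t ∈ Set.Ioc (0:ℝ) 1, ∀ x, u t x ≤ 0 := by
  have hu := hu_smooth.of_le (m := 2) ENat.LEInfty.out
  exact heat_maximum_principle_time_weighted_L2_general hu
    (fun t ht x => (hu_subsol t (Ioo_subset_Ioc_self ht) x).trans_eq <| heatLap_eq_laplacian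
      (contDiff_of_contDiffOn_prod_univ hu (Ioo_subset_Ioc_self ht)).contDiffAt)
    hu_init (fun r hr => hL_pos r (one_pos.trans_le hr))
    (fun r hr s _ => hL_mono r s (one_pos.trans_le hr)) hL_div
    fun r hr => hu_growth r (one_pos.trans_le hr)
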